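/- arXiv:1110.4523 — 2 statements merged into one kernel-verified Lean document; each statement's English description precedes it below -/
import Mathlib

section
/- Let G = (V ∪ {s}, E) be a finite sandpile graph, let W ⊆ V be nonempty with the induced subgraph of G on (V ∪ {s}) \ W connected, and let ξ be a minimal configuration on W. Then there exists a finite set 𝓔 of edges of G, each incident to a vertex of W, such that ν_G[η ∈ R_G : η_W = ξ] = det( K_G(e,f) )_{e,f ∈ 𝓔}. -/
open scoped Classical

namespace Sandpile

/-- A finite sandpile multigraph on vertex set `α` (which plays the role of `V ∪ {s}`),
given by a distinguished sink and symmetric edge multiplicities. -/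
structure Graph (α : Type*) where
  sink : α
  b : α → α → ℕ

namespace Graph

variable {α : Type*} [Fintype α] [DecidableEq α] (G : Graph α)

/-- The non-sink vertices (the set `V`). -/
def VSet : Finset α := Finset.univ.erase G.sink

/-- Degree restricted to a finite set of vertices: `deg_F(x) = ∑_{y ∈ F} b_{xy}`. -/
def degIn (F : Finset α) (x : α) : ℕ := ∑ y ∈ F, G.b x y

/-- Total degree `deg_G(x)`. -/
def deg (x : α) : ℕ := ∑ y, G.b x y

/-- `G` is a genuine finite sandpile graph: symmetric multiplicities, no loops, connected. -/
def IsSandpileGraph : Prop :=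
  (∀ x y, G.b x y = G.b y x) ∧ (∀ x, G.b x x = 0) ∧
    ∀ x y : α, Relation.ReflTransGen (fun u v => 0 < G.b u v) x y

/-- Connectivity of the subgraph induced on the vertex set `S`. -/
def ConnectedOn (S : Set α) : Prop :=
  ∀ x ∈ S, ∀ y ∈ S,
    Relation.ReflTransGen (fun u v => u ∈ S ∧ v ∈ S ∧ 0 < G.b u v) x y

/-- A sandpile is stable if every non-sink vertex carries fewer particles than its degree. -/
def Stable (η : α → ℕ) : Prop := ∀ x ∈ G.VSet, η x < G.deg x

/-- `η` is ample for `F` if some vertex of `F` has at least `deg_F` particles. -/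
def AmpleFor (η : α → ℕ) (F : Finset α) : Prop := ∃ x ∈ F, G.degIn F x ≤ η x

/-- Dhar's burning test: recurrent = stable and ample for every nonempty `F ⊆ V`. -/
def Recurrent (η : α → ℕ) : Prop :=
  G.Stable η ∧ ∀ F ⊆ G.VSet, F.Nonempty → G.AmpleFor η F

/-- Remove one particle at `w` (`η - δ_w`). -/
def SubOne (η : α → ℕ) (w : α) : α → ℕ := fun x => if x = w then η x - 1 else η x

/-- `η` and `ξ` agree on `W` (restriction `η_W = ξ_W`). -/
def EqOn (η ξ : α → ℕ) (W : Finset α) : Prop := ∀ x ∈ W, η x = ξ x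

/-- `ξ` is (generalized) minimal on `W`: it extends to a recurrent sandpile, and no
recurrent extension stays recurrent after removing a particle from a vertex of `W`.
(`η - δ_w ∉ R_G` holds automatically if `η w = 0`, as then `η - δ_w` is not a configuration.) -/
def Minimal (W : Finset α) (ξ : α → ℕ) : Prop :=
  (∃ η, G.Recurrent η ∧ EqOn η ξ W) ∧
    ∀ η, G.Recurrent η → EqOn η ξ W → ∀ w ∈ W, ¬(1 ≤ η w ∧ G.Recurrent (SubOne η w))

/-- `ν_G[P]`: the uniform probability of the event `P` under the uniform measure on
recurrent configurations (configurations are normalized to vanish at the sink). -/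
noncomputable def prob (P : (α → ℕ) → Prop) : ℝ :=
  (Nat.card {η : α → ℕ // η G.sink = 0 ∧ G.Recurrent η ∧ P η} : ℝ) /
    (Nat.card {η : α → ℕ // η G.sink = 0 ∧ G.Recurrent η} : ℝ)

/-- The graph Laplacian with the sink row and column deleted. -/
noncomputable def lapRed :
    Matrix {x : α // x ≠ G.sink} {x : α // x ≠ G.sink} ℝ :=
  Matrix.of fun x y =>
    if (x : α) = (y : α) then (G.deg ↑x : ℝ) else -(G.b ↑x ↑y : ℝ)

/-- `H = (Δ')⁻¹`, extended by `0` on the sink. -/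
noncomputable def Hfun (x y : α) : ℝ :=
  if hx : x = G.sink then 0
  else if hy : y = G.sink then 0
  else (G.lapRed)⁻¹ ⟨x, hx⟩ ⟨y, hy⟩

/-- Oriented edges of the multigraph `G`: an edge from `p.1` to `p.2.1`, with copy
index `p.2.2` (parallel edges are distinct). -/
abbrev OEdge (G : Graph α) : Type _ := {p : α × α × ℕ // p.2.2 < G.b p.1 p.2.1}

/-- `K_G(e,f) = δ_{ef} - Y_G(e,f)` where `Y_G` is the transfer current matrix. -/
noncomputable def Kmat (e f : G.OEdge) : ℝ :=
  (if e = f then 1 else 0) -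
    (G.Hfun e.1.1 f.1.1 - G.Hfun e.1.1 f.1.2.1 - G.Hfun e.1.2.1 f.1.1 +
      G.Hfun e.1.2.1 f.1.2.1)

/-- Unburnt sets of phase one of the burning algorithm based on `Q`:
`U_0 = V`, `U_i = U_{i-1} \ B_i` with `B_i = {x ∈ U_{i-1} \ Q : η x ≥ deg_{U_{i-1}} x}`. -/
def U1 (η : α → ℕ) (Q : Finset α) : ℕ → Finset α
  | 0 => G.VSet
  | i + 1 => (U1 η Q i).filter fun x => x ∈ Q ∨ η x < G.degIn (U1 η Q i) x

/-- The final unburnt set `U^{(1)}_I` of phase one (the sequence `U1` is decreasing,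
hence stabilizes after at most `|α|` steps). -/
def U1lim (η : α → ℕ) (Q : Finset α) : Finset α := G.U1 η Q (Fintype.card α)

/-- Unburnt sets of phase two of the burning algorithm based on `Q`. -/
def U2 (η : α → ℕ) (Q : Finset α) : ℕ → Finset α
  | 0 => G.U1lim η Q
  | i + 1 => (U2 η Q i).filter fun x => η x < G.degIn (U2 η Q i) x

/-- Recurrence in the wired graph `G_W` (note `deg_{G_W}(x) = deg_G(x)` for `x ∈ W`,
and `deg_F` for `F ⊆ W` is the same in `G_W` and `G`). -/
def WiredRecurrent (W : Finset α) (ξ : α → ℕ) : Prop :=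
  (∀ x ∈ W, ξ x < G.deg x) ∧ ∀ F ⊆ W, F.Nonempty → ∃ x ∈ F, G.degIn F x ≤ ξ x

/-- `ξ` is minimal in the wired graph `G_W`. -/
def WiredMinimal (W : Finset α) (ξ : α → ℕ) : Prop :=
  G.WiredRecurrent W ξ ∧ ∀ w ∈ W, ¬(1 ≤ ξ w ∧ G.WiredRecurrent W (SubOne ξ w))

/-- Entry points `E(ξ,W)` of `ξ ∈ R_{G_W}`: vertices burnable at the first step. -/
def entryPoints (W : Finset α) (ξ : α → ℕ) : Finset α :=
  W.filter fun w => G.degIn W w ≤ ξ w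

/-- `x` is burnable given the burnt set `S`: `η(x) ≥ deg_G(x) − ∑_{y ∈ S} b_{xy}`. -/
def Burnable (η : α → ℕ) (S : Finset α) (x : α) : Prop :=
  G.degIn (Finset.univ \ S) x ≤ η x

/-- A burning sequence starting from the burnt set `S`. -/
def IsBurnSeq (η : α → ℕ) : Finset α → List α → Prop
  | _, [] => True
  | S, x :: l => x ∉ S ∧ G.Burnable η S x ∧ IsBurnSeq η (insert x S) l

/-- `B` is a burnt set for `η`: some burning sequence from `{s}` burns exactly `B`. -/
def IsBurntSet (η : α → ℕ) (B : Finset α) : Prop :=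
  ∃ l : List α, G.IsBurnSeq η {G.sink} l ∧ l.toFinset = B

/-- Reachability within the vertex set `S`. -/
def ReachIn (S : Set α) (x y : α) : Prop :=
  Relation.ReflTransGen (fun u v => u ∈ S ∧ v ∈ S ∧ 0 < G.b u v) x y

/-- `C` is a connected component of the subgraph induced on `(V ∪ {s}) \ W`
that does not contain the sink. -/
def IsHoleComp (W C : Finset α) : Prop :=
  C.Nonempty ∧ G.sink ∉ C ∧
    ∀ x ∈ C, ∀ y : α, y ∈ C ↔ y ∉ W ∧ G.ReachIn {a : α | a ∉ W} x y

/-- Adjacency induced by a finite set `t` of (undirected, indexed) edges. -/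
def edgeRel (t : Finset (Sym2 α × ℕ)) (u v : α) : Prop := ∃ k : ℕ, (s(u, v), k) ∈ t

/-- `t` is a spanning tree of the multigraph `G`: it consists of edges of `G`
(parallel edges distinct), it spans (connected), and every edge is a bridge
(equivalently, it is acyclic). -/
def IsSpanningTree (t : Finset (Sym2 α × ℕ)) : Prop :=
  (∀ p ∈ t, ∃ x y : α, p.1 = s(x, y) ∧ p.2 < G.b x y) ∧
  (∀ u v : α, Relation.ReflTransGen (edgeRel t) u v) ∧
  ∀ p ∈ t, ∀ x y : α, p.1 = s(x, y) →
    ¬ Relation.ReflTransGen (edgeRel (t.erase p)) x y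

/-- Adjacency induced by a set of (undirected, indexed) edges. -/
def edgeRelSet (t : Set (Sym2 α × ℕ)) (u v : α) : Prop := ∃ k : ℕ, (s(u, v), k) ∈ t

/-- Set version of `IsSpanningTree`. -/
def IsSpanningTreeSet (t : Set (Sym2 α × ℕ)) : Prop :=
  (∀ p ∈ t, ∃ x y : α, p.1 = s(x, y) ∧ p.2 < G.b x y) ∧
  (∀ u v : α, Relation.ReflTransGen (edgeRelSet t) u v) ∧
  ∀ p ∈ t, ∀ x y : α, p.1 = s(x, y) →
    ¬ Relation.ReflTransGen (edgeRelSet (t \ {p})) x y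

/-- The step at which `x` burns in phase one (0 for the sink; `sInf ∅ = 0` if `x`
never burns in phase one). -/
noncomputable def p1time (η : α → ℕ) (Q : Finset α) (x : α) : ℕ :=
  sInf {i : ℕ | x ∉ G.U1 η Q i}

/-- The step at which `x` burns in phase two. -/
noncomputable def p2time (η : α → ℕ) (Q : Finset α) (x : α) : ℕ :=
  sInf {i : ℕ | x ∉ G.U2 η Q i}

/-- Vertices burnt at step `i` of phase one (`B^{(1)}_0 = {s}`). -/
def B1 (η : α → ℕ) (Q : Finset α) : ℕ → Finset α
  | 0 => {G.sink}
  | i + 1 => G.U1 η Q i \ G.U1 η Q (i + 1)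

/-- Vertices burnt at step `i` of phase two (`B^{(2)}_0` = everything burnt in phase
one, including the sink). -/
def B2 (η : α → ℕ) (Q : Finset α) : ℕ → Finset α
  | 0 => Finset.univ \ G.U1lim η Q
  | i + 1 => G.U2 η Q i \ G.U2 η Q (i + 1)

/-- The set `B^{(p)}_{i-1}` of vertices burnt at the step preceding the step at which
`x` burns (in the appropriate phase). -/
noncomputable def prevBurnt (η : α → ℕ) (Q : Finset α) (x : α) : Finset α :=
  if x ∈ G.U1lim η Q then G.B2 η Q (G.p2time η Q x - 1)
  else G.B1 η Q (G.p1time η Q x - 1)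

/-- The set `D = B^{(p)}_0 ∪ ⋯ ∪ B^{(p)}_{i-1}` of vertices burnt strictly before `x`
in the phase in which `x` burns. -/
noncomputable def burntBefore (η : α → ℕ) (Q : Finset α) (x : α) : Finset α :=
  if x ∈ G.U1lim η Q then Finset.univ \ G.U2 η Q (G.p2time η Q x - 1)
  else Finset.univ \ G.U1 η Q (G.p1time η Q x - 1)

/-- `j = η(x) − deg_G(x) + n_x` with `n_x = ∑_{y ∈ D} b_{xy}`. -/
noncomputable def jX (η : α → ℕ) (Q : Finset α) (x : α) : ℕ :=
  η x + G.degIn (G.burntBefore η Q x) x - G.deg x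

/-- The defining property of the edge `e_x` of the burning bijection based on `Q`:
`e_x` has tail `x`, head burnt at the previous step, and exactly `j` smaller elements
of `P_x` under the given edge order `lt x`. -/
def EdgeSpec (lt : α → G.OEdge → G.OEdge → Prop) (η : α → ℕ) (Q : Finset α)
    (x : α) (e : G.OEdge) : Prop :=
  e.1.1 = x ∧ e.1.2.1 ∈ G.prevBurnt η Q x ∧
    {f : G.OEdge | f.1.1 = x ∧ f.1.2.1 ∈ G.prevBurnt η Q x ∧ lt x f e}.ncard =
      G.jX η Q x

/-- The (oriented) spanning tree `t(η) = {e_x : x ∈ V}` assigned to `η` by the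
burning bijection based on `Q`. -/
def treeOf (lt : α → G.OEdge → G.OEdge → Prop) (η : α → ℕ) (Q : Finset α) :
    Set G.OEdge :=
  {e | ∃ x ∈ G.VSet, G.EdgeSpec lt η Q x e}

/-- Forget the orientation of an oriented edge. -/
def undir (e : G.OEdge) : Sym2 α × ℕ := (s(e.1.1, e.1.2.1), e.1.2.2)

/-- Total burning order: phase-one vertices first (at their phase-one step), then
phase-two vertices. -/
noncomputable def burnOrder (η : α → ℕ) (Q : Finset α) (x : α) : ℕ :=
  if x ∈ G.U1lim η Q then Fintype.card α + 1 + G.p2time η Q x else G.p1time η Q x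

/-- Edge multiplicities of the auxiliary graph `G_W^*` (on vertex set `W ∪ {s}`):
`b*_{xy} = b_{xy}` for `x,y ∈ W`; `b*_{xs} = ∑_{z ∉ W} b_{xz}` for `x ∈ Q` and
`b*_{xs} = 0` for `x ∈ W \ Q`. -/
def bstar (Q W : Finset α) (x y : α) : ℕ :=
  if x ∈ W ∧ y ∈ W then G.b x y
  else if x ∈ W ∧ y = G.sink then
    if x ∈ Q then ∑ z ∈ Finset.univ \ W, G.b x z else 0
  else if y ∈ W ∧ x = G.sink then
    if y ∈ Q then ∑ z ∈ Finset.univ \ W, G.b z y else 0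
  else 0

/-- Recurrence in the auxiliary graph `G_W^*`. -/
def StarRecurrent (Q W : Finset α) (ζ : α → ℕ) : Prop :=
  (∀ x ∈ W, ζ x < ∑ y ∈ insert G.sink W, G.bstar Q W x y) ∧
    ∀ F ⊆ W, F.Nonempty → ∃ x ∈ F, (∑ y ∈ F, G.bstar Q W x y) ≤ ζ x

end Graph

end Sandpile

open Sandpile

/-!
Complementation `η ↦ deg - 1 - η` turns recurrent configurations into superstable ones (`G`-parking
functions), whose number is the determinant of the reduced Laplacian because they represent the
classes of the sandpile group.

For `ξ` minimal, the complement `θ` of `ξ` is a maximal superstable configuration on `W`. Hence, if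
fire can burn all of `V` in a configuration extending `θ`, then it can burn all of `V \ W` before
entering `W`; conversely, once `V \ W` is burnt, superstability of `θ` lets the fire through `W`.
So which extensions of `θ` are superstable does not depend on how `G` looks at `W`: their number is
the same as for the graph `G'` in which a forest of parent edges replaces the edges at `W`, with `0`
in place of `θ`. All superstable configurations of `G'` vanish on `W`, so this number is the
determinant of the reduced Laplacian of `G'`. The graph `G'` arises by deleting a set `𝓔` of edges,
so by the Weinstein–Aronszajn identity the quotient of the two determinants is `det K_G` over `𝓔`.
-/

namespace Sandpile

namespace Graph

open scoped Matrix

section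

variable {α : Type*} {G : Graph α} {A B : Finset α} {w x : α}

lemma degIn_mono (h : A ⊆ B) : G.degIn A x ≤ G.degIn B x :=
  Finset.sum_le_sum_of_subset h

lemma degIn_insert [DecidableEq α] (h : w ∉ A) :
    G.degIn (insert w A) x = G.b x w + G.degIn A x :=
  Finset.sum_insert h

variable (G) in
/-- The extension by zero to the sink of a function on the other vertices. -/
noncomputable def zeroExt {R : Type*} [Zero R] (f : {x : α // x ≠ G.sink} → R) : α → R :=
  Function.extend Subtype.val f 0

@[simp]
lemma zeroExt_coe {R : Type*} [Zero R] (f : {x : α // x ≠ G.sink} → R)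
    (x : {x : α // x ≠ G.sink}) : G.zeroExt f x = f x :=
  Subtype.val_injective.extend_apply f 0 x

@[simp]
lemma zeroExt_sink {R : Type*} [Zero R] (f : {x : α // x ≠ G.sink} → R) :
    G.zeroExt f G.sink = 0 :=
  Function.extend_apply' f (0 : α → R) _ fun ⟨x, hx⟩ => x.2 hx

end

variable {α : Type*} [Fintype α] [DecidableEq α] (G : Graph α)

/-! ### Superstable configurations -/

/-- `c` is superstable on `A` in the graph obtained from `G` by deleting `B` and wiring all vertices
outside `A ∪ B` to the sink: no nonempty subset of `A` can be fired simultaneously without making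
`c` negative. Equivalently, fire started outside `A ∪ B` burns all of `A` when `B` is fireproof. -/
def SuperstableOn (A B : Finset α) (c : α → ℕ) : Prop :=
  ∀ F ⊆ A, F.Nonempty → ∃ x ∈ F, c x < G.degIn (F ∪ B)ᶜ x

/-- Superstable configurations of `G`, also known as `G`-parking functions. Like the configurations
counted by `prob`, they are normalized to vanish at the sink. -/
def Superstable (c : α → ℕ) : Prop := c G.sink = 0 ∧ G.SuperstableOn G.VSet ∅ c

/-- `c` is superstable on `W`, and no longer so once a particle is added anywhere on `W`. Under the
duality between recurrent and superstable configurations, this is minimality. -/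
def IsMaximalSuperstableOn (W : Finset α) (c : α → ℕ) : Prop :=
  G.SuperstableOn W ∅ c ∧ ∀ w ∈ W, ¬ G.SuperstableOn W ∅ (c + Pi.single w 1)

variable {G} {A A₁ A₂ B B' F R W : Finset α} {b' : α → α → ℕ} {c c' η θ θ' ξ : α → ℕ} {w x y : α}

lemma mem_VSet : x ∈ G.VSet ↔ x ≠ G.sink := by simp [VSet]

lemma subset_VSet : F ⊆ G.VSet ↔ G.sink ∉ F := by simp [VSet, Finset.subset_erase]

lemma degIn_add_degIn_compl : G.degIn A x + G.degIn Aᶜ x = G.deg x :=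
  Finset.sum_add_sum_compl A _

lemma superstableOn_singleton :
    G.SuperstableOn {w} B c ↔ c w < G.degIn (insert w B)ᶜ w := by
  refine ⟨fun h => by simpa using h {w} subset_rfl (by simp), fun h F hF hne => ?_⟩
  obtain rfl : F = {w} := (Finset.subset_singleton_iff.1 hF).resolve_left hne.ne_empty
  simpa using h

lemma SuperstableOn.anti (h : G.SuperstableOn A₂ B' c) (hA : A₁ ⊆ A₂) (hB : B ⊆ B')
    (hc : ∀ x ∈ A₁, c' x ≤ c x) : G.SuperstableOn A₁ B c' := by
  intro F hF hne
  obtain ⟨x, hxF, hx⟩ := h F (hF.trans hA) hne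
  refine ⟨x, hxF, (hc x (hF hxF)).trans_lt (hx.trans_le (degIn_mono ?_))⟩
  gcongr

-- Fire burns `A₁` while avoiding `A₂`, and then burns `A₂`.
lemma SuperstableOn.union (h₁ : G.SuperstableOn A₁ (A₂ ∪ B) c) (h₂ : G.SuperstableOn A₂ B c) :
    G.SuperstableOn (A₁ ∪ A₂) B c := by
  intro F hF hne
  by_cases hFA : F ⊆ A₂
  · exact h₂ F hFA hne
  · obtain ⟨x, hxF, hx⟩ := h₁ (F \ A₂) (by grind) (Finset.sdiff_nonempty.2 hFA)
    have hsub : (F \ A₂ ∪ (A₂ ∪ B))ᶜ ⊆ (F ∪ B)ᶜ := Finset.compl_subset_compl.2 (by grind)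
    exact ⟨x, (Finset.mem_sdiff.1 hxF).1, hx.trans_le (degIn_mono hsub)⟩

lemma superstableOn_zero
    (h : ∀ x ∈ A, ∃ y ∉ A, Relation.ReflTransGen (fun u v => v ∉ B ∧ 0 < G.b u v) x y) :
    G.SuperstableOn A B 0 := by
  rintro F hFA ⟨x, hxF⟩
  by_contra! hblocked
  have hclosed : ∀ u ∈ F, ∀ v ∉ B, 0 < G.b u v → v ∈ F := by
    intro u hu v hvB huv
    by_contra hvF
    have hle : G.b u v ≤ G.degIn (F ∪ B)ᶜ u :=
      Finset.single_le_sum (f := G.b u) (fun _ _ => Nat.zero_le _) (by simp [hvF, hvB])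
    exact (huv.trans_le (hle.trans (hblocked u hu))).false
  obtain ⟨y, hyA, hxy⟩ := h x (hFA hxF)
  have hyF : y ∈ F := by
    clear hyA
    induction hxy with
    | refl => exact hxF
    | tail _ huv ih => exact hclosed _ ih _ huv.1 huv.2
  exact hyA (hFA hyF)

lemma SuperstableOn.add_single (hc : G.SuperstableOn W ∅ c) (hRW : R ⊆ W)
    (hR : G.SuperstableOn (W \ R) R c) (hwR : w ∈ R) (hw : c w + 1 < G.degIn Rᶜ w) :
    G.SuperstableOn W ∅ (c + Pi.single w 1) := by
  have h₁ : G.SuperstableOn (W \ R) R (c + Pi.single w 1) :=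
    hR.anti subset_rfl subset_rfl fun x hx => by
      simp [show x ≠ w by grind]
  have h₂ : G.SuperstableOn {w} (R.erase w) (c + Pi.single w 1) := by
    simpa [superstableOn_singleton, Finset.insert_erase hwR] using hw
  have h₃ : G.SuperstableOn (R.erase w) ∅ (c + Pi.single w 1) :=
    hc.anti ((Finset.erase_subset w R).trans hRW) subset_rfl fun x hx => by
      simp [Finset.ne_of_mem_erase hx]
  have h₄ : G.SuperstableOn R ∅ (c + Pi.single w 1) := by
    have h := SuperstableOn.union (by rwa [Finset.union_empty]) h₃
    rwa [← Finset.insert_eq, Finset.insert_erase hwR] at h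
  have h := SuperstableOn.union (by rwa [Finset.union_empty]) h₄
  rwa [Finset.sdiff_union_of_subset hRW] at h

-- Let the fire spread from outside `F ∪ W` with `F` fireproof, `R` being what is left of `W`. As
-- `F` is blocked, the next vertex to burn is some `w ∈ R`. If `w` has a neighbour in `F`, which
-- does burn in the wired graph, then it tolerates one more particle; otherwise `F` is still
-- blocked after `w` has burnt.
lemma exists_superstableOn_add_single (hb : ∀ x y, G.b x y = G.b y x) (hFW : Disjoint F W)
    (hF : F.Nonempty) (hc : G.SuperstableOn (F ∪ W) ∅ c) (hRW : R ⊆ W)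
    (hblocked : ∀ x ∈ F, G.degIn (F ∪ R)ᶜ x ≤ c x) (hR : G.SuperstableOn (W \ R) (F ∪ R) c) :
    ∃ w ∈ W, G.SuperstableOn W ∅ (c + Pi.single w 1) := by
  induction R using Finset.strongInduction with
  | H R ih =>
    obtain ⟨w, hw, hlt⟩ := hc (F ∪ R) (by gcongr) (hF.mono Finset.subset_union_left)
    rw [Finset.union_empty] at hlt
    have hwR : w ∈ R := by grind
    have hwF : w ∉ F := Finset.disjoint_right.1 hFW (hRW hwR)
    by_cases hadj : ∃ x ∈ F, 0 < G.b w x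
    · obtain ⟨x, hxF, hwx⟩ := hadj
      refine ⟨w, hRW hwR, SuperstableOn.add_single
        (hc.anti Finset.subset_union_right subset_rfl fun _ _ => le_rfl) hRW
        (hR.anti subset_rfl Finset.subset_union_right fun _ _ => le_rfl) hwR ?_⟩
      have hxR : x ∉ R := fun h => Finset.disjoint_left.1 hFW hxF (hRW h)
      calc c w + 1 < G.b w x + G.degIn (F ∪ R)ᶜ w := by omega
        _ = G.degIn (insert x (F ∪ R)ᶜ) w := (degIn_insert (by simp [hxF])).symm
        _ ≤ G.degIn Rᶜ w := degIn_mono <| Finset.insert_subset (Finset.mem_compl.2 hxR) <|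
          Finset.compl_subset_compl.2 Finset.subset_union_right
    · push Not at hadj
      have herase : F ∪ R.erase w = (F ∪ R).erase w := by
        rw [Finset.erase_union_distrib, Finset.erase_eq_of_notMem hwF]
      refine ih (R.erase w) (Finset.erase_ssubset hwR) ((Finset.erase_subset w R).trans hRW) ?_ ?_
      · intro x hxF
        rw [herase, Finset.compl_erase, degIn_insert (by simp [hwR]), hb,
          Nat.le_zero.1 (hadj x hxF), zero_add]
        exact hblocked x hxF
      · have hw' : G.SuperstableOn {w} (F ∪ R.erase w) c := by
          rwa [superstableOn_singleton, herase, Finset.insert_erase hw]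
        refine (SuperstableOn.union (A₁ := W \ R) ?_ hw').anti (by grind) subset_rfl
          fun _ _ => le_rfl
        rwa [herase, ← Finset.insert_eq, Finset.insert_erase hw]

lemma SuperstableOn.of_isMaximalSuperstableOn (hb : ∀ x y, G.b x y = G.b y x)
    (hAW : Disjoint A W) (hc : G.SuperstableOn (A ∪ W) ∅ c) (hW : G.IsMaximalSuperstableOn W c) :
    G.SuperstableOn A W c := by
  intro F hFA hF
  by_contra! hblocked
  have hempty : G.SuperstableOn (W \ W) (F ∪ W) c := by simp [SuperstableOn]
  obtain ⟨w, hw, h⟩ := exists_superstableOn_add_single hb (hAW.mono_left hFA) hF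
    (hc.anti (by gcongr) subset_rfl fun _ _ => le_rfl) subset_rfl hblocked hempty
  exact hW.2 w hw h

/-! ### The reduced Laplacian -/

variable (G) in
/-- The reduced Laplacian over a commutative ring `R`. Its instance over `ℝ` is `lapRed`; the one
over `ℤ` defines the sandpile group. -/
def laplacian (R : Type*) [CommRing R] :
    Matrix {x : α // x ≠ G.sink} {x : α // x ≠ G.sink} R :=
  Matrix.of fun x y => if (x : α) = y then (G.deg x : R) else -(G.b x y : R)

section laplacian

variable {R : Type*} [CommRing R]

lemma lapRed_eq_laplacian : G.lapRed = G.laplacian ℝ := rfl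

lemma sum_mul_zeroExt (g : α → R) (f : {x : α // x ≠ G.sink} → R) :
    ∑ x, g x * G.zeroExt f x = ∑ x : {x : α // x ≠ G.sink}, g x * f x := by
  simp [Fintype.sum_eq_add_sum_subtype_ne _ G.sink]

lemma laplacian_mulVec (hloop : ∀ x, G.b x x = 0) (f : {x : α // x ≠ G.sink} → R)
    (x : {x : α // x ≠ G.sink}) :
    (G.laplacian R *ᵥ f) x = ∑ y, (G.b x y : R) * (G.zeroExt f x - G.zeroExt f y) := by
  have hentry : ∀ y : {x : α // x ≠ G.sink},
      G.laplacian R x y * f y = (if y = x then G.deg x * f x else 0) - G.b x y * f y := by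
    intro y
    by_cases hxy : x = y
    · simp [laplacian, ← hxy, hloop]
    · simp [laplacian, Subtype.val_injective.ne hxy, Ne.symm hxy]
  calc (G.laplacian R *ᵥ f) x
      = G.deg x * f x - ∑ y : {x : α // x ≠ G.sink}, G.b x y * f y := by
        simp [Matrix.mulVec, dotProduct, hentry, Finset.sum_sub_distrib]
    _ = ∑ y, (G.b x y : R) * (G.zeroExt f x - G.zeroExt f y) := by
        simp [mul_sub, Finset.sum_sub_distrib, sum_mul_zeroExt, ← Finset.sum_mul, deg]

lemma laplacian_transpose (hb : ∀ x y, G.b x y = G.b y x) :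
    (G.laplacian R)ᵀ = G.laplacian R := by
  ext x y
  by_cases hxy : (x : α) = y
  · simp [laplacian, hxy]
  · simp [laplacian, hxy, Ne.symm hxy, hb y x]

lemma intCast_det_laplacian : ((G.laplacian ℤ).det : R) = (G.laplacian R).det := by
  rw [Int.cast_det]
  congr 1
  ext x y
  by_cases hxy : (x : α) = y <;> simp [laplacian, hxy]

end laplacian

/-! ### Removing edges -/

section edges

variable {α : Type*} (G : Graph α)

/-- The graph with the same vertices and the same sink as `G`, and edge multiplicities `b'`. -/
abbrev withMult (b' : α → α → ℕ) : Graph α := { G with b := b' }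

/-- An edge as a pair of endpoints together with the index of a parallel copy. -/
def oedgeEquivSigma : G.OEdge ≃ Σ p : α × α, Fin (G.b p.1 p.2) where
  toFun e := ⟨(e.1.1, e.1.2.1), e.1.2.2, e.2⟩
  invFun q := ⟨(q.1.1, q.1.2, q.2), q.2.2⟩
  left_inv _ := rfl
  right_inv _ := rfl

variable [Fintype α]

instance : Fintype G.OEdge := Fintype.ofEquiv _ G.oedgeEquivSigma.symm

/-- The edges that have to be deleted from `G` for the multiplicities to drop to `b'`. Each of them
is listed with only one of its two orientations, and among parallel edges it is those of highest
index that are deleted. -/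
noncomputable def removedEdges (b' : α → α → ℕ) : Finset G.OEdge :=
  {e | WellOrderingRel e.1.1 e.1.2.1 ∧ b' e.1.1 e.1.2.1 ≤ e.1.2.2}

variable {G} in
lemma sum_removedEdges {M : Type*} [AddCommMonoid M] (b' : α → α → ℕ) (g : α → α → M) :
    ∑ e ∈ G.removedEdges b', g e.1.1 e.1.2.1 =
      ∑ x, ∑ y, if WellOrderingRel x y then (G.b x y - b' x y) • g x y else 0 := by
  have hcopies : ∀ m n : ℕ, ∀ a : M, (∑ k : Fin n, if m ≤ k then a else 0) = (n - m) • a := by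
    intro m n a
    have hfilter : {k ∈ Finset.range n | m ≤ k} = Finset.Ico m n := by ext; simp [and_comm]
    rw [Fin.sum_univ_eq_sum_range (fun k => if m ≤ k then a else 0), ← Finset.sum_filter, hfilter,
      Finset.sum_const, Nat.card_Ico]
  rw [removedEdges, Finset.sum_filter, ← G.oedgeEquivSigma.symm.sum_comp, Fintype.sum_sigma,
    Fintype.sum_prod_type]
  refine Finset.sum_congr rfl fun x _ => Finset.sum_congr rfl fun y _ => ?_
  by_cases hxy : WellOrderingRel x y
  · simp [oedgeEquivSigma, hxy, hcopies]
  · simp [oedgeEquivSigma, hxy]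

end edges

lemma sum_sum_eq_sum_sum_ite_wellOrderingRel {ι M : Type*} [Fintype ι] [AddCommMonoid M]
    {g : ι → ι → M} (hg : ∀ i, g i i = 0) :
    ∑ i, ∑ j, g i j = ∑ i, ∑ j, if WellOrderingRel i j then g i j + g j i else 0 := by
  have hsplit : ∀ i j : ι, g i j =
      (if WellOrderingRel i j then g i j else 0) + if WellOrderingRel j i then g i j else 0 := by
    intro i j
    rcases trichotomous_of WellOrderingRel i j with h | rfl | h
    · simp [h, asymm h]
    · simp [hg]
    · simp [h, asymm h]
  calc ∑ i, ∑ j, g i j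
      = (∑ i, ∑ j, if WellOrderingRel i j then g i j else 0) +
          ∑ i, ∑ j, if WellOrderingRel j i then g i j else 0 := by
        simp_rw [← Finset.sum_add_distrib, ← hsplit]
    _ = ∑ i, ∑ j, if WellOrderingRel i j then g i j + g j i else 0 := by
        rw [Finset.sum_comm (f := fun i j => if WellOrderingRel j i then g i j else 0)]
        simp only [← Finset.sum_add_distrib]
        refine Finset.sum_congr rfl fun i _ => Finset.sum_congr rfl fun j _ => ?_
        split_ifs <;> simp

section pointMass

variable {α : Type*} [DecidableEq α]

/-- The vector `δ_a` on the non-sink vertices; it is zero when `a` is the sink. -/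
def pointMass (G : Graph α) (a : α) : {x : α // x ≠ G.sink} → ℝ :=
  fun x => if (x : α) = a then 1 else 0

/-- The signed incidence matrix of a finite set of edges, with the row of the sink deleted. -/
def incidence (G : Graph α) (E : Finset G.OEdge) : Matrix {x : α // x ≠ G.sink} E ℝ :=
  Matrix.of fun x e => G.pointMass e.1.1.1 x - G.pointMass e.1.1.2.1 x

variable {G : Graph α} {E : Finset G.OEdge} {a : α}

lemma pointMass_sink : G.pointMass G.sink = 0 := by
  ext x
  simp [pointMass, x.2]

lemma pointMass_eq_single (ha : a ≠ G.sink) : G.pointMass a = Pi.single ⟨a, ha⟩ 1 := by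
  ext x
  simp [pointMass, Pi.single_apply, Subtype.ext_iff]

end pointMass

lemma pointMass_dotProduct (a : α) (f : {x : α // x ≠ G.sink} → ℝ) :
    G.pointMass a ⬝ᵥ f = G.zeroExt f a := by
  obtain rfl | ha := eq_or_ne a G.sink
  · simp [pointMass_sink]
  · simpa [pointMass_eq_single ha] using (zeroExt_coe f ⟨a, ha⟩).symm

lemma Hfun_eq_pointMass_dotProduct (x y : α) :
    G.Hfun x y = G.pointMass x ⬝ᵥ ((G.laplacian ℝ)⁻¹ *ᵥ G.pointMass y) := by
  rw [← lapRed_eq_laplacian, Hfun]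
  split_ifs with hx hy
  · simp [hx, pointMass_sink]
  · simp [hy, pointMass_sink]
  · simp [pointMass_eq_single, hx, hy]

lemma vecMul_incidence (E : Finset G.OEdge) (f : {x : α // x ≠ G.sink} → ℝ) (e : E) :
    (f ᵥ* G.incidence E) e = G.zeroExt f e.1.1.1 - G.zeroExt f e.1.1.2.1 := by
  rw [← pointMass_dotProduct, ← pointMass_dotProduct, ← sub_dotProduct, dotProduct_comm]
  rfl

lemma incidence_removedEdges_mul_transpose (hG : G.IsSandpileGraph) {b' : α → α → ℕ}
    (hb' : ∀ x y, b' x y = b' y x) (hle : ∀ x y, b' x y ≤ G.b x y) :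
    G.incidence (G.removedEdges b') * (G.incidence (G.removedEdges b'))ᵀ =
      G.laplacian ℝ - (G.withMult b').laplacian ℝ := by
  obtain ⟨hb, hloop, -⟩ := hG
  have hloop' : ∀ x, b' x x = 0 := fun x => Nat.le_zero.1 ((hle x x).trans (hloop x).le)
  refine Matrix.ext_iff_mulVec.2 fun f => funext fun x => ?_
  set φ := G.zeroExt f
  calc ((G.incidence (G.removedEdges b') * (G.incidence (G.removedEdges b'))ᵀ) *ᵥ f) x
      = ∑ e ∈ G.removedEdges b',
          (G.pointMass e.1.1 x - G.pointMass e.1.2.1 x) * (φ e.1.1 - φ e.1.2.1) := by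
        rw [← Matrix.mulVec_mulVec, Matrix.mulVec_transpose]
        refine Eq.trans (Finset.sum_congr rfl fun e _ => ?_) (Finset.sum_coe_sort _ _)
        rw [vecMul_incidence]
        rfl
    _ = ∑ u, ∑ v, (G.b u v - b' u v : ℝ) * (G.pointMass u x * (φ u - φ v)) := by
        rw [sum_removedEdges b' fun u v => (G.pointMass u x - G.pointMass v x) * (φ u - φ v),
          sum_sum_eq_sum_sum_ite_wellOrderingRel
            (g := fun u v => (G.b u v - b' u v : ℝ) * (G.pointMass u x * (φ u - φ v))) (by simp)]
        refine Finset.sum_congr rfl fun u _ => Finset.sum_congr rfl fun v _ => ?_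
        rw [hb v u, hb' v u, nsmul_eq_mul, Nat.cast_sub (hle u v)]
        congr 1
        ring
    _ = ∑ v, (G.b x v - b' x v : ℝ) * (φ x - φ v) := by
        simp [pointMass, Finset.sum_ite_eq]
    _ = ((G.laplacian ℝ - (G.withMult b').laplacian ℝ) *ᵥ f) x := by
        rw [Matrix.sub_mulVec, Pi.sub_apply, laplacian_mulVec hloop,
          laplacian_mulVec (G := G.withMult b') hloop']
        simp only [sub_mul, Finset.sum_sub_distrib]
        rfl

lemma vecMul_incidence_removedEdges_zero_injective (hG : G.IsSandpileGraph) :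
    Function.Injective (G.incidence (G.removedEdges 0)).vecMul := by
  intro f g hfg
  obtain ⟨hb, -, hconn⟩ := hG
  have hker : (f - g) ᵥ* G.incidence (G.removedEdges 0) = 0 := by
    rw [Matrix.sub_vecMul, sub_eq_zero]
    exact hfg
  have hedge : ∀ e ∈ G.removedEdges 0,
      G.zeroExt (f - g) e.1.1 = G.zeroExt (f - g) e.1.2.1 := fun e he => by
    simpa [vecMul_incidence, sub_eq_zero] using congr_fun hker ⟨e, he⟩
  have hadj : ∀ u v, 0 < G.b u v → G.zeroExt (f - g) u = G.zeroExt (f - g) v := by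
    intro u v huv
    rcases trichotomous_of WellOrderingRel u v with h | rfl | h
    · exact hedge ⟨(u, v, 0), huv⟩ (by simp [removedEdges, h])
    · rfl
    · exact (hedge ⟨(v, u, 0), hb u v ▸ huv⟩ (by simp [removedEdges, h])).symm
  have hzero : ∀ y, G.zeroExt (f - g) y = 0 := by
    intro y
    induction hconn G.sink y with
    | refl => simp
    | tail _ huv ih => rw [← hadj _ _ huv, ih]
  ext x
  simpa [sub_eq_zero] using hzero x

lemma posDef_laplacian (hG : G.IsSandpileGraph) : (G.laplacian ℝ).PosDef := by
  have hzero : (G.withMult 0).laplacian ℝ = 0 := by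
    ext x y
    simp [laplacian, withMult, deg]
  have hfactor : G.laplacian ℝ =
      G.incidence (G.removedEdges 0) * (G.incidence (G.removedEdges 0))ᴴ := by
    rw [Matrix.conjTranspose_eq_transpose_of_trivial,
      incidence_removedEdges_mul_transpose (b' := 0) hG (fun _ _ => rfl) (fun _ _ => Nat.zero_le _),
      hzero, sub_zero]
  rw [hfactor]
  exact .mul_conjTranspose_self _ (vecMul_incidence_removedEdges_zero_injective hG)

lemma det_laplacian_pos (hG : G.IsSandpileGraph) : 0 < (G.laplacian ℝ).det :=
  (posDef_laplacian hG).det_pos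

lemma det_Kmat_mul_det_laplacian (hG : G.IsSandpileGraph) (E : Finset G.OEdge) :
    (Matrix.of fun e f : E => G.Kmat e f).det * (G.laplacian ℝ).det =
      (G.laplacian ℝ - G.incidence E * (G.incidence E)ᵀ).det := by
  set B := G.incidence E
  set L := G.laplacian ℝ
  have hL : IsUnit L.det := (det_laplacian_pos hG).ne'.isUnit
  have hK : (Matrix.of fun e f : E => G.Kmat e f) = 1 - Bᵀ * (L⁻¹ * B) := by
    ext e f
    have hterm : ∀ a c, G.Hfun a c = G.pointMass a ⬝ᵥ (L⁻¹ *ᵥ G.pointMass c) :=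
      Hfun_eq_pointMass_dotProduct
    have hprod : (Bᵀ * (L⁻¹ * B)) e f =
        (G.pointMass e.1.1.1 - G.pointMass e.1.1.2.1) ⬝ᵥ
          (L⁻¹ *ᵥ (G.pointMass f.1.1.1 - G.pointMass f.1.1.2.1)) := rfl
    simp only [Matrix.of_apply, Kmat, Matrix.sub_apply, Matrix.one_apply, Subtype.ext_iff, hprod,
      hterm, Matrix.mulVec_sub, dotProduct_sub, sub_dotProduct]
    ring
  calc (Matrix.of fun e f : E => G.Kmat e f).det * L.det
      = L.det * (1 - L⁻¹ * B * Bᵀ).det := by rw [hK, Matrix.det_one_sub_mul_comm, mul_comm]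
    _ = (L - B * Bᵀ).det := by
        rw [← Matrix.det_mul, mul_sub, mul_one, Matrix.mul_assoc,
          Matrix.mul_nonsing_inv_cancel_left _ _ hL]

lemma det_Kmat_removedEdges (hG : G.IsSandpileGraph) {b' : α → α → ℕ}
    (hb' : ∀ x y, b' x y = b' y x) (hle : ∀ x y, b' x y ≤ G.b x y) :
    (Matrix.of fun e f : G.removedEdges b' => G.Kmat e f).det =
      ((G.withMult b').laplacian ℝ).det / (G.laplacian ℝ).det := by
  rw [eq_div_iff (det_laplacian_pos hG).ne', det_Kmat_mul_det_laplacian hG,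
    incidence_removedEdges_mul_transpose hG hb' hle]
  congr 1
  exact sub_sub_cancel (G.laplacian ℝ) _

/-! ### The sandpile group -/

variable (G) in
/-- The sandpile group of `G`, the cokernel of the reduced Laplacian over `ℤ`. -/
abbrev SandpileGroup : Type _ :=
  ({x : α // x ≠ G.sink} → ℤ) ⧸ LinearMap.range (G.laplacian ℤ).mulVecLin

variable (G) in
/-- The class of a configuration in the sandpile group. -/
def sandpileClass (c : α → ℕ) : G.SandpileGroup :=
  Submodule.Quotient.mk fun x => (c x : ℤ)

-- The set of maximizers of `f` can be fired without making `c` negative.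
lemma SuperstableOn.nonpos_of_laplacian_mulVec_le (hloop : ∀ x, G.b x x = 0)
    (hc : G.SuperstableOn G.VSet ∅ c) {f : {x : α // x ≠ G.sink} → ℤ}
    (hf : ∀ x, (G.laplacian ℤ *ᵥ f) x ≤ c x) : f ≤ 0 := by
  set φ := G.zeroExt f with hφ
  obtain ⟨m, -, hm⟩ := Finset.exists_max_image Finset.univ φ ⟨G.sink, Finset.mem_univ _⟩
  by_contra hpos
  obtain ⟨y, hy⟩ : ∃ y, 0 < f y := by simpa [Pi.le_def] using hpos
  have hφm : 0 < φ m := hy.trans_le (by simpa [φ] using hm y (Finset.mem_univ _))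
  let F : Finset α := {x | φ x = φ m}
  have hF : F ⊆ G.VSet := subset_VSet.2 (by simpa [F, hφ] using hφm.ne)
  obtain ⟨x, hxF, hx⟩ := hc F hF ⟨m, by simp [F]⟩
  rw [Finset.union_empty] at hx
  have hxm : φ x = φ m := by simpa [F] using hxF
  have hle : (G.degIn Fᶜ x : ℤ) ≤ ∑ y, (G.b x y : ℤ) * (φ x - φ y) := by
    rw [degIn, Nat.cast_sum]
    refine (Finset.sum_le_sum fun y hy => ?_).trans
      (Finset.sum_le_sum_of_subset_of_nonneg (Finset.subset_univ _) fun y _ _ => ?_)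
    · have hne : φ y ≠ φ m := by simpa [F] using hy
      have hlt : φ y < φ x := hxm ▸ lt_of_le_of_ne (hm y (Finset.mem_univ _)) hne
      exact le_mul_of_one_le_right (Nat.cast_nonneg _) (by omega)
    · exact mul_nonneg (Nat.cast_nonneg _) (sub_nonneg.2 (hxm ▸ hm y (Finset.mem_univ _)))
  have hfx := hf ⟨x, mem_VSet.1 (hF hxF)⟩
  rw [laplacian_mulVec hloop] at hfx
  exact hx.not_ge (by exact_mod_cast hle.trans hfx)

lemma Superstable.eq_of_sandpileClass_eq (hloop : ∀ x, G.b x x = 0) (hc : G.Superstable c)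
    (hc' : G.Superstable c') (h : G.sandpileClass c = G.sandpileClass c') : c = c' := by
  obtain ⟨f, hf⟩ := (Submodule.Quotient.eq _).1 h
  have hf' : ∀ x, (G.laplacian ℤ *ᵥ f) x = c x - c' x := congr_fun hf
  have hle : f ≤ 0 := hc.2.nonpos_of_laplacian_mulVec_le hloop fun x => by rw [hf']; omega
  have hge : -f ≤ 0 := hc'.2.nonpos_of_laplacian_mulVec_le hloop fun x => by
    rw [Matrix.mulVec_neg, Pi.neg_apply, hf']; omega
  obtain rfl : f = 0 := le_antisymm hle (neg_nonpos.1 hge)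
  ext x
  obtain rfl | hx := eq_or_ne x G.sink
  · rw [hc.1, hc'.1]
  · simpa [sub_eq_zero, eq_comm] using hf' ⟨x, hx⟩

lemma superstableOn_VSet_zero
    (hconn : ∀ x, Relation.ReflTransGen (fun u v => 0 < G.b u v) x G.sink) :
    G.SuperstableOn G.VSet ∅ 0 :=
  superstableOn_zero fun x _ => ⟨G.sink, by simp [VSet], by simpa using hconn x⟩

lemma det_laplacian_int_pos (hG : G.IsSandpileGraph) : 0 < (G.laplacian ℤ).det := by
  have h := det_laplacian_pos hG
  rw [← intCast_det_laplacian] at h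
  exact_mod_cast h

lemma mulVec_adjugate_mulVec {n R : Type*} [Fintype n] [DecidableEq n] [CommRing R]
    (M : Matrix n n R) (v : n → R) : M *ᵥ (M.adjugate *ᵥ v) = M.det • v := by
  rw [Matrix.mulVec_mulVec, Matrix.mul_adjugate, Matrix.smul_mulVec, Matrix.one_mulVec]

lemma exists_laplacian_mulVec_pos (hG : G.IsSandpileGraph) :
    ∃ h : {x : α // x ≠ G.sink} → ℕ,
      ∀ x, 0 < (G.laplacian ℤ *ᵥ fun y => (h y : ℤ)) x := by
  set L := G.laplacian ℤ with hL
  have hdet : 0 < L.det := det_laplacian_int_pos hG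
  let g := L.adjugate *ᵥ 1
  have hLg : L *ᵥ g = L.det • 1 := mulVec_adjugate_mulVec L 1
  have hg : -g ≤ 0 :=
    (superstableOn_VSet_zero fun x => hG.2.2 x _).nonpos_of_laplacian_mulVec_le hG.2.1 fun x => by
      simp [Matrix.mulVec_neg, ← hL, hLg, hdet.le]
  have htoNat : (fun x => ((g x).toNat : ℤ)) = g :=
    funext fun x => Int.toNat_of_nonneg (by simpa using hg x)
  refine ⟨fun x => (g x).toNat, fun x => ?_⟩
  rw [htoNat, hLg]
  simpa using hdet

lemma zeroExt_ite_mem (hF : F ⊆ G.VSet) (y : α) :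
    G.zeroExt (fun x => if (x : α) ∈ F then (1 : ℤ) else 0) y = if y ∈ F then 1 else 0 := by
  obtain rfl | hy := eq_or_ne y G.sink
  · simp [subset_VSet.1 hF]
  · exact zeroExt_coe _ ⟨y, hy⟩

lemma laplacian_mulVec_ite_mem_le (hloop : ∀ x, G.b x x = 0) (hF : F ⊆ G.VSet)
    (hc : ∀ x ∈ F, G.degIn Fᶜ x ≤ c x) (x : {x : α // x ≠ G.sink}) :
    (G.laplacian ℤ *ᵥ fun x => if (x : α) ∈ F then 1 else 0) x ≤ c x := by
  simp only [laplacian_mulVec hloop, zeroExt_ite_mem hF]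
  by_cases hx : (x : α) ∈ F
  · have hdeg : ∑ y, (G.b x y : ℤ) * (1 - if y ∈ F then 1 else 0) = G.degIn Fᶜ x := by
      have hterm : ∀ y, (G.b x y : ℤ) * (1 - if y ∈ F then 1 else 0) =
          if y ∈ Fᶜ then (G.b x y : ℤ) else 0 := fun y => by by_cases hy : y ∈ F <;> simp [hy]
      rw [degIn, Nat.cast_sum, Finset.sum_congr rfl fun y _ => hterm y, Finset.sum_ite_mem,
        Finset.univ_inter]
    simpa [hx, hdeg] using hc x hx
  · refine (Finset.sum_nonpos fun y _ => ?_).trans (Nat.cast_nonneg _)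
    simp only [hx, if_false]
    split_ifs <;> simp

-- Fire a set of vertices that shows that `c` is not superstable.
lemma exists_sandpileClass_eq_of_not_superstable (hG : G.IsSandpileGraph)
    {h : {x : α // x ≠ G.sink} → ℕ} (hh : ∀ x, 0 < (G.laplacian ℤ *ᵥ fun y => (h y : ℤ)) x)
    (hc0 : c G.sink = 0) (hc : ¬ G.Superstable c) :
    ∃ c', c' G.sink = 0 ∧ G.sandpileClass c' = G.sandpileClass c ∧
      ∑ x, h x * c' x < ∑ x, h x * c x := by
  obtain ⟨hb, hloop, -⟩ := hG
  obtain ⟨F, hFV, ⟨v, hvF⟩, hF⟩ : ∃ F ⊆ G.VSet, F.Nonempty ∧ ∀ x ∈ F, G.degIn Fᶜ x ≤ c x := by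
    simpa [Superstable, SuperstableOn, hc0] using hc
  let f : {x : α // x ≠ G.sink} → ℤ := fun x => if (x : α) ∈ F then 1 else 0
  set Lf := G.laplacian ℤ *ᵥ f with hLf
  have hle : ∀ x, Lf x ≤ c x := laplacian_mulVec_ite_mem_le hloop hFV hF
  let c' := G.zeroExt fun x => (c x - Lf x).toNat
  have hc' : ∀ x : {x : α // x ≠ G.sink}, (c' x : ℤ) = c x - Lf x := fun x => by
    simpa [c'] using hle x
  refine ⟨c', zeroExt_sink _, (Submodule.Quotient.eq _).2 ⟨-f, ?_⟩, ?_⟩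
  · ext x
    simp [hc', Matrix.mulVec_neg, hLf]
  · have hpos : 0 < (fun x => (h x : ℤ)) ⬝ᵥ Lf := by
      rw [hLf, Matrix.dotProduct_mulVec, ← Matrix.mulVec_transpose, laplacian_transpose hb]
      refine Finset.sum_pos' (fun x _ => mul_nonneg (hh x).le ?_)
        ⟨⟨v, mem_VSet.1 (hFV hvF)⟩, Finset.mem_univ _, by simpa [f, hvF] using hh _⟩
      positivity
    zify
    simpa [hc', mul_sub, Finset.sum_sub_distrib, dotProduct] using hpos

lemma exists_superstable_sandpileClass_eq (hG : G.IsSandpileGraph) (g : G.SandpileGroup) :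
    ∃ c, G.Superstable c ∧ G.sandpileClass c = g := by
  obtain ⟨h, hpos⟩ := exists_laplacian_mulVec_pos hG
  have hreduce : ∀ c, c G.sink = 0 →
      ∃ c', G.Superstable c' ∧ G.sandpileClass c' = G.sandpileClass c := by
    intro c hc0
    induction hn : ∑ x, h x * c x using Nat.strong_induction_on generalizing c with
    | _ n ih =>
      by_cases hc : G.Superstable c
      · exact ⟨c, hc, rfl⟩
      obtain ⟨c₁, hc₁0, hc₁, hlt⟩ := exists_sandpileClass_eq_of_not_superstable hG hpos hc0 hc
      obtain ⟨c₂, hc₂, hc₂₁⟩ := ih _ (hn ▸ hlt) c₁ hc₁0 rfl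
      exact ⟨c₂, hc₂, hc₂₁.trans hc₁⟩
  obtain ⟨v, rfl⟩ := Submodule.Quotient.mk_surjective _ g
  let u := v + (G.laplacian ℤ).det • |v|
  have hu : ∀ x, 0 ≤ u x := fun x => by
    have hdet := le_mul_of_one_le_left (abs_nonneg (v x)) (det_laplacian_int_pos hG)
    have hv := neg_abs_le (v x)
    simp only [u, Pi.add_apply, Pi.smul_apply, Pi.abs_apply, smul_eq_mul]
    omega
  obtain ⟨c, hc, hcu⟩ := hreduce (G.zeroExt fun x => (u x).toNat) (zeroExt_sink _)
  refine ⟨c, hc, hcu.trans ((Submodule.Quotient.eq _).2 ⟨(G.laplacian ℤ).adjugate *ᵥ |v|, ?_⟩)⟩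
  ext x
  have hux : ((G.zeroExt (fun x => (u x).toNat) x : ℕ) : ℤ) = u x := by
    rw [zeroExt_coe, Int.toNat_of_nonneg (hu x)]
  rw [Matrix.mulVecLin_apply, mulVec_adjugate_mulVec, Pi.sub_apply, hux]
  exact (add_sub_cancel_left _ _).symm

lemma natCard_quotient_range_mulVecLin {n : Type*} [Fintype n] [DecidableEq n] (M : Matrix n n ℤ)
    (hM : M.det ≠ 0) :
    Nat.card ((n → ℤ) ⧸ LinearMap.range M.mulVecLin) = M.det.natAbs := by
  let e := LinearEquiv.ofInjective M.mulVecLin (Matrix.mulVec_injective_of_det_ne_zero hM)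
  rw [← Submodule.natAbs_det_equiv _ e, ← LinearMap.det_toLin' M]
  rfl

lemma natCard_superstable (hG : G.IsSandpileGraph) :
    (Nat.card {c // G.Superstable c} : ℝ) = (G.laplacian ℝ).det := by
  have hbij : Function.Bijective fun c : {c // G.Superstable c} => G.sandpileClass c := by
    refine ⟨fun c c' h => Subtype.ext (c.2.eq_of_sandpileClass_eq hG.2.1 c'.2 h), fun g => ?_⟩
    obtain ⟨c, hc, rfl⟩ := exists_superstable_sandpileClass_eq hG g
    exact ⟨⟨c, hc⟩, rfl⟩
  rw [Nat.card_congr (Equiv.ofBijective _ hbij),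
    natCard_quotient_range_mulVecLin _ (det_laplacian_int_pos hG).ne',
    ← intCast_det_laplacian (R := ℝ), Nat.cast_natAbs, Int.cast_abs,
    abs_of_pos (by exact_mod_cast det_laplacian_int_pos hG)]

/-! ### Duality between recurrent and superstable configurations -/

variable (G) in
/-- The dual `deg - 1 - c` of a configuration, normalized to vanish at the sink. On stable
configurations this is an involution that exchanges recurrence and superstability. -/
def dual (c : α → ℕ) : α → ℕ := fun x => if x = G.sink then 0 else G.deg x - 1 - c x

lemma dual_sink : G.dual c G.sink = 0 := by simp [dual]

lemma dual_of_ne (hx : x ≠ G.sink) : G.dual c x = G.deg x - 1 - c x := by simp [dual, hx]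

lemma dual_dual_apply (hx : x ≠ G.sink) (hc : c x < G.deg x) : G.dual (G.dual c) x = c x := by
  rw [dual_of_ne hx, dual_of_ne hx]
  omega

lemma Stable.dual_dual (hc : G.Stable c) (hc0 : c G.sink = 0) : G.dual (G.dual c) = c := by
  ext x
  obtain rfl | hx := eq_or_ne x G.sink
  · rw [dual_sink, hc0]
  · exact dual_dual_apply hx (hc x (mem_VSet.2 hx))

lemma Stable.eqOn_dual_iff (hc : G.Stable c) (hWs : G.sink ∉ W) (hξ : ∀ x ∈ W, ξ x < G.deg x) :
    EqOn (G.dual c) ξ W ↔ EqOn c (G.dual ξ) W := by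
  refine forall₂_congr fun x hxW => ?_
  have hx : x ≠ G.sink := fun h => hWs (h ▸ hxW)
  have hcx := hc x (mem_VSet.2 hx)
  have hξx := hξ x hxW
  rw [dual_of_ne hx, dual_of_ne hx]
  omega

lemma SuperstableOn.lt_deg (hc : G.SuperstableOn A B c) (hx : x ∈ A) : c x < G.deg x := by
  obtain ⟨y, hy, hlt⟩ := hc {x} (by simpa using hx) (by simp)
  rw [Finset.mem_singleton.1 hy] at hlt
  exact hlt.trans_le (degIn_mono (Finset.subset_univ _))

lemma Superstable.recurrent_dual (hc : G.Superstable c) : G.Recurrent (G.dual c) := by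
  refine ⟨fun x hx => ?_, fun F hF hne => ?_⟩
  · have := hc.2.lt_deg hx
    rw [dual_of_ne (mem_VSet.1 hx)]
    omega
  · obtain ⟨x, hxF, hx⟩ := hc.2 F hF hne
    refine ⟨x, hxF, ?_⟩
    have hsum := G.degIn_add_degIn_compl (A := F) (x := x)
    rw [Finset.union_empty] at hx
    rw [dual_of_ne (mem_VSet.1 (hF hxF))]
    omega

lemma Recurrent.superstable_dual (hη : G.Recurrent η) : G.Superstable (G.dual η) := by
  refine ⟨dual_sink, fun F hF hne => ?_⟩
  obtain ⟨x, hxF, hx⟩ := hη.2 F hF hne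
  refine ⟨x, hxF, ?_⟩
  have hsum := G.degIn_add_degIn_compl (A := F) (x := x)
  have hlt := hη.1 x (hF hxF)
  rw [Finset.union_empty, dual_of_ne (mem_VSet.1 (hF hxF))]
  omega

lemma natCard_recurrent (P : (α → ℕ) → Prop) :
    Nat.card {η // η G.sink = 0 ∧ G.Recurrent η ∧ P η} =
      Nat.card {c // G.Superstable c ∧ P (G.dual c)} :=
  Nat.card_congr
    { toFun η := ⟨G.dual η, η.2.2.1.superstable_dual, by
        rw [η.2.2.1.1.dual_dual η.2.1]
        exact η.2.2.2⟩
      invFun c := ⟨G.dual c, dual_sink, c.2.1.recurrent_dual, c.2.2⟩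
      left_inv η := Subtype.ext (η.2.2.1.1.dual_dual η.2.1)
      right_inv c := Subtype.ext
        (Stable.dual_dual (fun _ hx => c.2.1.2.lt_deg hx) c.2.1.1) }

lemma prob_eqOn (hWs : G.sink ∉ W) (hξ : ∀ x ∈ W, ξ x < G.deg x) :
    G.prob (fun η => EqOn η ξ W) =
      (Nat.card {c // G.Superstable c ∧ EqOn c (G.dual ξ) W} : ℝ) /
        Nat.card {c // G.Superstable c} := by
  have htotal := natCard_recurrent (G := G) fun _ => True
  simp only [and_true] at htotal
  rw [prob, htotal, natCard_recurrent, Nat.card_congr (Equiv.subtypeEquivRight fun c =>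
    and_congr_right fun hc => Stable.eqOn_dual_iff (fun _ hx => hc.2.lt_deg hx) hWs hξ)]

lemma superstable_piecewise (hWs : G.sink ∉ W) (hconn : G.ConnectedOn {x | x ∉ W})
    (hθ : G.SuperstableOn W ∅ θ) : G.Superstable (W.piecewise θ 0) := by
  refine ⟨by simp [hWs], ?_⟩
  have hzero : G.SuperstableOn (G.VSet \ W) W 0 := by
    refine superstableOn_zero fun x hx => ⟨G.sink, by simp [VSet], ?_⟩
    exact (hconn x (Finset.mem_sdiff.1 hx).2 _ hWs).lift id fun _ _ h => h.2
  have h := SuperstableOn.union (c := W.piecewise θ 0) (A₁ := G.VSet \ W) (A₂ := W) (B := ∅)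
    (hzero.anti subset_rfl (by simp) fun x hx => by simp [(Finset.mem_sdiff.1 hx).2])
    (hθ.anti subset_rfl subset_rfl fun x hx => by simp [hx])
  rwa [Finset.sdiff_union_of_subset (subset_VSet.2 hWs)] at h

lemma Minimal.isMaximalSuperstableOn_dual (hmin : G.Minimal W ξ) (hWs : G.sink ∉ W)
    (hconn : G.ConnectedOn {x | x ∉ W}) : G.IsMaximalSuperstableOn W (G.dual ξ) := by
  obtain ⟨⟨η, hη, hηξ⟩, hmin⟩ := hmin
  have hdual : ∀ x ∈ W, G.dual ξ x = G.dual η x := fun x hx => by simp [dual, hηξ x hx]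
  have hθ : G.SuperstableOn W ∅ (G.dual ξ) :=
    hη.superstable_dual.2.anti (subset_VSet.2 hWs) subset_rfl fun x hx => (hdual x hx).le
  refine ⟨hθ, fun w hw hadd => ?_⟩
  have hne : ∀ x ∈ W, x ≠ G.sink := fun x hx h => hWs (h ▸ hx)
  refine hmin (G.dual (W.piecewise (G.dual ξ) 0))
    (superstable_piecewise hWs hconn hθ).recurrent_dual (fun x hx => ?_) w hw ⟨?_, ?_⟩
  · have hlt := hη.1 x (mem_VSet.2 (hne x hx))
    rw [hηξ x hx] at hlt
    rw [dual_of_ne (hne x hx), Finset.piecewise_eq_of_mem _ _ _ hx, dual_of_ne (hne x hx)]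
    omega
  · have hlt := hadd.lt_deg hw
    simp only [Pi.add_apply, Pi.single_eq_same] at hlt
    rw [dual_of_ne (hne w hw), Finset.piecewise_eq_of_mem _ _ _ hw]
    omega
  · convert (superstable_piecewise hWs hconn hadd).recurrent_dual using 1
    ext x
    obtain rfl | hxw := eq_or_ne x w
    · simp only [SubOne, ↓reduceIte, dual, hne x hw, hw, Finset.piecewise_eq_of_mem, Pi.add_apply,
        Pi.single_eq_same]
      omega
    · simp [SubOne, dual, hxw, Finset.piecewise]

/-! ### Counting the extensions of a maximal superstable configuration -/

lemma IsMaximalSuperstableOn.congr (hθ : G.IsMaximalSuperstableOn W θ) (h : EqOn c θ W) :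
    G.IsMaximalSuperstableOn W c :=
  ⟨hθ.1.anti subset_rfl subset_rfl fun x hx => (h x hx).le, fun w hw hadd => hθ.2 w hw <|
    hadd.anti subset_rfl subset_rfl fun x hx => by simp [h x hx]⟩

lemma superstable_iff_of_isMaximalSuperstableOn (hb : ∀ x y, G.b x y = G.b y x)
    (hWs : G.sink ∉ W) (hW : G.IsMaximalSuperstableOn W c) :
    G.Superstable c ↔ c G.sink = 0 ∧ G.SuperstableOn (G.VSet \ W) W c := by
  have hV : G.VSet \ W ∪ W = G.VSet := Finset.sdiff_union_of_subset (subset_VSet.2 hWs)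
  refine and_congr_right fun _ => ⟨fun h => ?_, fun h => ?_⟩
  · exact .of_isMaximalSuperstableOn hb Finset.sdiff_disjoint (by rwa [hV]) hW
  · rw [← hV]
    exact .union (by rwa [Finset.union_empty]) hW.1

lemma superstableOn_withMult_iff (hAB : Disjoint A B)
    (hb' : ∀ x ∉ B, ∀ y ∉ B, b' x y = G.b x y) :
    (G.withMult b').SuperstableOn A B c ↔ G.SuperstableOn A B c := by
  refine forall₃_congr fun F hF _ => exists_congr fun x => and_congr_right fun hx => ?_
  have hdeg : (G.withMult b').degIn (F ∪ B)ᶜ x = G.degIn (F ∪ B)ᶜ x :=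
    Finset.sum_congr rfl fun y hy => hb' x (Finset.disjoint_left.1 hAB (hF hx)) y fun h =>
      Finset.mem_compl.1 hy (Finset.mem_union_right _ h)
  rw [hdeg]

lemma natCard_superstable_eqOn_withMult (hb : ∀ x y, G.b x y = G.b y x)
    (hb' : ∀ x y, b' x y = b' y x) (hagree : ∀ x ∉ W, ∀ y ∉ W, b' x y = G.b x y)
    (hWs : G.sink ∉ W) (hθ : G.IsMaximalSuperstableOn W θ)
    (hθ' : (G.withMult b').IsMaximalSuperstableOn W θ') :
    Nat.card {c // G.Superstable c ∧ EqOn c θ W} =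
      Nat.card {c // (G.withMult b').Superstable c ∧ EqOn c θ' W} := by
  have hswap : ∀ c c', EqOn c θ W → EqOn c' θ' W → (∀ x ∉ W, c x = c' x) →
      (G.Superstable c ↔ (G.withMult b').Superstable c') := by
    intro c c' hc hc' heq
    have hcc' : ∀ x ∈ G.VSet \ W, c x = c' x := fun x hx => heq x (Finset.mem_sdiff.1 hx).2
    calc G.Superstable c
      _ ↔ c G.sink = 0 ∧ G.SuperstableOn (G.VSet \ W) W c :=
        superstable_iff_of_isMaximalSuperstableOn hb hWs (hθ.congr hc)
      _ ↔ c' G.sink = 0 ∧ G.SuperstableOn (G.VSet \ W) W c' :=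
        and_congr (by rw [heq _ hWs])
          ⟨fun h => h.anti subset_rfl subset_rfl fun x hx => (hcc' x hx).ge,
            fun h => h.anti subset_rfl subset_rfl fun x hx => (hcc' x hx).le⟩
      _ ↔ c' G.sink = 0 ∧ (G.withMult b').SuperstableOn (G.VSet \ W) W c' :=
        and_congr_right fun _ => (superstableOn_withMult_iff Finset.sdiff_disjoint hagree).symm
      _ ↔ (G.withMult b').Superstable c' :=
        (superstable_iff_of_isMaximalSuperstableOn (G := G.withMult b') hb' hWs
          (hθ'.congr hc')).symm
  have hon : ∀ c ζ : α → ℕ, EqOn (W.piecewise ζ c) ζ W := fun c ζ x hx => by simp [hx]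
  have hoff : ∀ c ζ : α → ℕ, ∀ x ∉ W, W.piecewise ζ c x = c x := fun c ζ x hx => by simp [hx]
  have hinv : ∀ c ζ ζ' : α → ℕ, EqOn c ζ W → W.piecewise ζ (W.piecewise ζ' c) = c := by
    intro c ζ ζ' h
    ext x
    by_cases hx : x ∈ W <;> simp [hx, h x]
  exact Nat.card_congr
    { toFun c := ⟨W.piecewise θ' c,
        (hswap _ _ c.2.2 (hon _ _) fun x hx => (hoff _ _ x hx).symm).1 c.2.1, hon _ _⟩
      invFun c := ⟨W.piecewise θ c, (hswap _ _ (hon _ _) c.2.2 (hoff _ _)).2 c.2.1, hon _ _⟩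
      left_inv c := Subtype.ext (hinv _ _ _ c.2.2)
      right_inv c := Subtype.ext (hinv _ _ _ c.2.2) }

/-! ### Replacing the edges at `W` by a forest -/

section

variable {α : Type*} {G : Graph α} {W : Finset α} {x y : α}

lemma exists_parent (hG : G.IsSandpileGraph) :
    ∃ (p : α → α) (d : α → ℕ), ∀ x ≠ G.sink, 0 < G.b x (p x) ∧ d (p x) < d x := by
  obtain ⟨hb, hloop, hconn⟩ := hG
  let A : SimpleGraph α :=
    { Adj u v := 0 < G.b u v
      symm := ⟨fun u v huv => hb u v ▸ huv⟩
      loopless := ⟨fun u hu => hu.ne' (hloop u)⟩ }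
  have hparent : ∀ x, x ≠ G.sink → ∃ y, 0 < G.b x y ∧ A.dist y G.sink < A.dist x G.sink := by
    intro x hx
    have hreach : A.Reachable x G.sink := (A.reachable_iff_reflTransGen _ _).2 (hconn x _)
    obtain ⟨q, hq⟩ := hreach.exists_walk_length_eq_dist
    cases q with
    | nil => exact absurd rfl hx
    | cons hadj q =>
      refine ⟨_, hadj, (SimpleGraph.dist_le q).trans_lt ?_⟩
      simp [← hq]
  choose! p hp using hparent
  exact ⟨p, fun x => A.dist x G.sink, hp⟩

variable [DecidableEq α]

variable (G) in
/-- The edge multiplicities obtained from those of `G` by replacing all edges that touch `W` by a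
single edge from each `x ∈ W` to its parent `p x`. -/
def forestMult (W : Finset α) (p : α → α) (x y : α) : ℕ :=
  if x ∉ W ∧ y ∉ W then G.b x y
  else if (x ∈ W ∧ y = p x) ∨ (y ∈ W ∧ x = p y) then 1 else 0

lemma forestMult_comm (hb : ∀ x y, G.b x y = G.b y x) {p : α → α} (x y : α) :
    G.forestMult W p x y = G.forestMult W p y x := by
  simp only [forestMult, hb x y, and_comm (a := x ∉ W), or_comm (a := x ∈ W ∧ _)]

lemma forestMult_le (hb : ∀ x y, G.b x y = G.b y x) {p : α → α}
    (hp : ∀ x ∈ W, 0 < G.b x (p x)) (x y : α) : G.forestMult W p x y ≤ G.b x y := by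
  unfold forestMult
  split_ifs with h h'
  · rfl
  · obtain ⟨hx, rfl⟩ | ⟨hy, rfl⟩ := h'
    · exact hp x hx
    · exact hb y _ ▸ hp y hy
  · exact Nat.zero_le _

lemma forestMult_of_notMem {p : α → α} (hx : x ∉ W) (hy : y ∉ W) :
    G.forestMult W p x y = G.b x y := by
  simp [forestMult, hx, hy]

lemma isSandpileGraph_withMult_forestMult (hG : G.IsSandpileGraph) (hWs : G.sink ∉ W)
    (hconn : G.ConnectedOn {x | x ∉ W}) {p : α → α} {d : α → ℕ}
    (hp : ∀ x ∈ W, 0 < G.b x (p x)) (hd : ∀ x ∈ W, d (p x) < d x) :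
    (G.withMult (G.forestMult W p)).IsSandpileGraph := by
  obtain ⟨hb, hloop, -⟩ := hG
  let r : α → α → Prop := fun u v => 0 < G.forestMult W p u v
  have : Std.Symm r := ⟨fun u v huv => huv.trans_eq (forestMult_comm hb u v)⟩
  have hsink : ∀ x, Relation.ReflTransGen r x G.sink := by
    intro x
    induction hn : d x using Nat.strong_induction_on generalizing x with
    | _ n ih =>
      by_cases hx : x ∈ W
      · exact .head (by simp [r, forestMult, hx]) (ih _ (hn ▸ hd x hx) _ rfl)
      · exact (hconn x hx _ hWs).lift id fun u v huv =>
          huv.2.2.trans_eq (forestMult_of_notMem huv.1 huv.2.1).symm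
  exact ⟨forestMult_comm hb, fun x => Nat.le_zero.1 ((forestMult_le hb hp x x).trans (hloop x).le),
    fun x y => (hsink x).trans (symm_of (Relation.ReflTransGen r) (hsink y))⟩

end

-- The only edge leaving the subtree rooted at `w` joins `w` to its parent.
lemma SuperstableOn.eqOn_zero_of_forestMult {p : α → α}
    (hc : (G.withMult (G.forestMult W p)).SuperstableOn W ∅ c) : EqOn c 0 W := by
  intro w hw
  let F : Finset α := {x ∈ W | Relation.ReflTransGen (fun u v => u ∈ W ∧ v = p u) x w}
  have hexit : ∀ x ∈ F, ∀ y ∉ F,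
      G.forestMult W p x y ≤ if y = p x then if x = w then 1 else 0 else 0 := by
    intro x hxF y hyF
    obtain ⟨hxW, hxw⟩ := Finset.mem_filter.1 hxF
    have hyx : ¬ (y ∈ W ∧ x = p y) := fun ⟨hy, hxy⟩ =>
      hyF (Finset.mem_filter.2 ⟨hy, .head ⟨hy, hxy⟩ hxw⟩)
    have hroot : y = p x → x = w := by
      rintro rfl
      obtain hxw | ⟨_, ⟨-, rfl⟩, hpxw⟩ := hxw.cases_head
      · exact hxw
      have hpx : p x ∈ W := by
        obtain h | ⟨_, ⟨h, -⟩, -⟩ := hpxw.cases_head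
        exacts [h ▸ hw, h]
      exact absurd (Finset.mem_filter.2 ⟨hpx, hpxw⟩) hyF
    by_cases hy : y = p x <;> simp_all [forestMult]
  have hwF : w ∈ F := Finset.mem_filter.2 ⟨hw, .refl⟩
  obtain ⟨x, hxF, hx⟩ := hc F (Finset.filter_subset _ _) ⟨w, hwF⟩
  have hdeg : (G.withMult (G.forestMult W p)).degIn Fᶜ x ≤ if x = w then 1 else 0 := by
    refine (Finset.sum_le_sum fun y hy => hexit x hxF y (Finset.mem_compl.1 hy)).trans ?_
    rw [Finset.sum_ite_eq']
    split_ifs <;> simp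
  rw [Finset.union_empty] at hx
  split_ifs at hdeg with h
  · subst h
    exact Nat.lt_one_iff.1 (hx.trans_le hdeg)
  · omega

lemma isMaximalSuperstableOn_zero_forestMult (hWs : G.sink ∉ W) {p : α → α}
    (hG' : (G.withMult (G.forestMult W p)).IsSandpileGraph) :
    (G.withMult (G.forestMult W p)).IsMaximalSuperstableOn W 0 := by
  refine ⟨superstableOn_zero fun x _ => ⟨G.sink, hWs, by simpa using hG'.2.2 x G.sink⟩,
    fun w hw h => ?_⟩
  simpa using h.eqOn_zero_of_forestMult w hw

lemma superstable_forestMult_and_eqOn_zero_iff (hWs : G.sink ∉ W) {p : α → α} :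
    (G.withMult (G.forestMult W p)).Superstable c ∧ EqOn c 0 W ↔
      (G.withMult (G.forestMult W p)).Superstable c :=
  and_iff_left_of_imp fun hc =>
    (hc.2.anti (subset_VSet.2 hWs) subset_rfl fun _ _ => le_rfl).eqOn_zero_of_forestMult

lemma mem_or_mem_of_mem_removedEdges_forestMult {p : α → α} {e : G.OEdge}
    (he : e ∈ G.removedEdges (G.forestMult W p)) : e.1.1 ∈ W ∨ e.1.2.1 ∈ W := by
  by_contra! h
  have hle := (Finset.mem_filter.1 he).2.2
  rw [forestMult_of_notMem h.1 h.2] at hle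
  exact hle.not_gt e.2

end Graph

end Sandpile

/-- The probability of a minimal configuration is a determinant of
the matrix `K_G` over a set of edges touching `W`. -/
theorem statement_0 {α : Type*} [Fintype α] [DecidableEq α] (G : Sandpile.Graph α)
    (hG : G.IsSandpileGraph) (W : Finset α) (hWne : W.Nonempty) (hWs : G.sink ∉ W)
    (hconn : G.ConnectedOn {x : α | x ∉ W}) (ξ : α → ℕ)
    (hstable : ∀ x ∈ W, ξ x < G.deg x) (hmin : G.Minimal W ξ) :
    ∃ 𝓔 : Finset G.OEdge,
      (∀ e ∈ 𝓔, e.1.1 ∈ W ∨ e.1.2.1 ∈ W) ∧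
      G.prob (fun η => Graph.EqOn η ξ W) =
        Matrix.det (Matrix.of fun e f : ↥𝓔 => G.Kmat e f) := by
  obtain ⟨p, d, hpd⟩ := Graph.exists_parent hG
  have hW : ∀ x ∈ W, 0 < G.b x (p x) ∧ d (p x) < d x := fun x hx => hpd x fun h => hWs (h ▸ hx)
  have hp : ∀ x ∈ W, 0 < G.b x (p x) := fun x hx => (hW x hx).1
  let b' := G.forestMult W p
  have hG' : (G.withMult b').IsSandpileGraph :=
    Graph.isSandpileGraph_withMult_forestMult hG hWs hconn hp fun x hx => (hW x hx).2
  refine ⟨G.removedEdges b', fun e he => Graph.mem_or_mem_of_mem_removedEdges_forestMult he, ?_⟩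
  have hextend : Nat.card {c // G.Superstable c ∧ Graph.EqOn c (G.dual ξ) W} =
      Nat.card {c // (G.withMult b').Superstable c ∧ Graph.EqOn c 0 W} :=
    Graph.natCard_superstable_eqOn_withMult hG.1 hG'.1
      (fun _ hx _ hy => Graph.forestMult_of_notMem hx hy) hWs
      (hmin.isMaximalSuperstableOn_dual hWs hconn)
      (Graph.isMaximalSuperstableOn_zero_forestMult hWs hG')
  have hzero : Nat.card {c // (G.withMult b').Superstable c ∧ Graph.EqOn c 0 W} =
      Nat.card {c // (G.withMult b').Superstable c} :=
    Nat.card_congr <| Equiv.subtypeEquivRight fun _ =>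
      Graph.superstable_forestMult_and_eqOn_zero_iff hWs
  rw [Graph.prob_eqOn hWs hstable, hextend, hzero,
    Graph.natCard_superstable hG', Graph.natCard_superstable hG,
    Graph.det_Kmat_removedEdges hG hG'.1 (Graph.forestMult_le hG.1 hp)]
end

section
/- Let G = (V ∪ {s}, E) be a finite sandpile graph, let W ⊆ V be nonempty with the induced subgraph of G on (V ∪ {s}) \ W connected, and let ξ be a minimal configuration on W. Then there exists a finite set 𝓔 of edges of G, each incident to a vertex of W, such that the number of recurrent sandpiles η ∈ R_G with η_W = ξ equals the number of spanning trees of G containing no edge of 𝓔. -/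
open scoped Classical

open Sandpile

/-!
A minimal configuration on `W` is the indegree sequence of an acyclic orientation of the edges
inside `W`: along a burning sequence of `W` each vertex burns with no particle to spare, so it holds
one particle per edge to a vertex burnt later. The last vertex `z` carries no particles, so it must
burn after all its neighbours in the whole graph; deleting its edges, subtracting one particle from
each neighbour per deleted edge and making `z` a sink is a bijection of recurrent sandpiles. On the
side of spanning trees, `z` is made a new root, hanging as a leaf from one fixed edge while its
other edges are forbidden. Once `W` is exhausted, recurrent sandpiles and rooted spanning forests
are equinumerous, because both satisfy the same deletion-contraction recursion.
-/

namespace Sandpile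

section Forests

variable {α ι : Type*}

/-- The edge `e` joins a vertex of `F` to a vertex outside `F`. -/
def Crosses (F : Finset α) (e : Sym2 α) : Prop := ∃ u ∈ F, ∃ v ∉ F, e = s(u, v)

lemma crosses_mk {F : Finset α} {u v : α} : Crosses F s(u, v) ↔ ¬(u ∈ F ↔ v ∈ F) := by
  simp only [Crosses, Sym2.eq_iff]
  grind

/-- The edges `t` connect every vertex to `S`. This is phrased through cuts instead of paths, so
that contracting an edge or removing a leaf only changes which sets `F` are tested; see
`spans_singleton_iff` for the link with paths. -/
def Spans (t : Finset (Sym2 α × ι)) (S : Finset α) : Prop :=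
  ∀ F : Finset α, F.Nonempty → Disjoint F S → ∃ p ∈ t, Crosses F p.1

lemma not_spans_of_notMem {t : Finset (Sym2 α × ι)} {S : Finset α} {z : α} (hz : z ∉ S)
    (ht : ∀ q ∈ t, z ∉ q.1) : ¬ Spans t S := by
  intro h
  obtain ⟨q, hq, u, hu, v, -, huv⟩ := h {z} (Finset.singleton_nonempty z) (by simpa using hz)
  rw [Finset.mem_singleton] at hu
  exact ht q hq (by simp [huv, hu])

variable [DecidableEq α] [DecidableEq ι]

lemma spans_insert_iff_of_mem {t : Finset (Sym2 α × ι)} {S : Finset α} {e : Sym2 α × ι} {x a : α}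
    (he : e.1 = s(x, a)) (ha : a ∈ S) : Spans (insert e t) S ↔ Spans t (insert x S) := by
  simp only [Spans, Finset.exists_mem_insert, he, crosses_mk, Finset.disjoint_insert_right]
  refine ⟨fun h F hF ⟨hxF, hFS⟩ => ?_, fun h F hF hFS => ?_⟩
  · exact (h F hF hFS).resolve_left (by simp [hxF, Finset.disjoint_right.1 hFS ha])
  · by_cases hxF : x ∈ F
    · exact .inl (by simp [hxF, Finset.disjoint_right.1 hFS ha])
    · exact .inr (h F hF ⟨hxF, hFS⟩)

lemma crosses_insert_iff {F : Finset α} {z : α} {e : Sym2 α} (hz : z ∉ e) :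
    Crosses (insert z F) e ↔ Crosses F e := by
  induction e with
  | _ u v =>
    rw [Sym2.mem_iff, not_or] at hz
    simp only [crosses_mk, Finset.mem_insert, Ne.symm hz.1, Ne.symm hz.2, false_or]

lemma spans_insert_iff_of_leaf {t : Finset (Sym2 α × ι)} {S : Finset α} {e : Sym2 α × ι} {z a : α}
    (he : e.1 = s(z, a)) (hz : z ∉ S) (hza : z ≠ a) (ht : ∀ q ∈ t, z ∉ q.1) :
    Spans (insert e t) S ↔ Spans t (insert z S) := by
  simp only [Spans, Finset.exists_mem_insert, he, crosses_mk, Finset.disjoint_insert_right]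
  refine ⟨fun h F hF ⟨hzF, hFS⟩ => ?_, fun h F hF hFS => ?_⟩
  · by_cases haF : a ∈ F
    · obtain ⟨q, hq, hcross⟩ := (h (insert z F) (Finset.insert_nonempty z F)
        (Finset.disjoint_insert_left.2 ⟨hz, hFS⟩)).resolve_left (by simp [haF])
      exact ⟨q, hq, (crosses_insert_iff (ht q hq)).1 hcross⟩
    · exact (h F hF hFS).resolve_left (by simp [haF, hzF])
  · by_cases hzF : z ∈ F
    · by_cases haF : a ∈ F
      · obtain ⟨q, hq, hcross⟩ := h (F.erase z) ⟨a, Finset.mem_erase.2 ⟨hza.symm, haF⟩⟩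
          ⟨Finset.notMem_erase z F, hFS.mono_left (Finset.erase_subset z F)⟩
        rw [← crosses_insert_iff (ht q hq), Finset.insert_erase hzF] at hcross
        exact .inr ⟨q, hq, hcross⟩
      · exact .inl (by simp [hzF, haF])
    · exact .inr (h F hF ⟨hzF, hFS⟩)

/-- The spanning forests of `E` with one root in each component, the roots being the elements of
`S`: the edge sets connecting every vertex to `S` from which no edge can be removed. -/
def forests (E : Finset (Sym2 α × ι)) (S : Finset α) : Set (Finset (Sym2 α × ι)) :=
  {t | t ⊆ E ∧ Spans t S ∧ ∀ p ∈ t, ¬ Spans (t.erase p) S}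

lemma forests_sdiff_mem (E : Finset (Sym2 α × ι)) (S : Finset α) (e : Sym2 α × ι) :
    forests E S \ {t | e ∈ t} = forests (E.erase e) S := by
  ext t
  simp only [forests, Set.mem_sdiff, Set.mem_ofPred_eq, Finset.subset_erase]
  tauto

lemma mem_forests_iff_of_subset {E T t : Finset (Sym2 α × ι)} {S : Finset α} (hT : T ⊆ E) :
    t ∈ forests T S ↔ t ∈ forests E S ∧ ∀ p ∈ E \ T, p ∉ t := by
  have hsub : t ⊆ T ↔ t ⊆ E ∧ ∀ p ∈ E \ T, p ∉ t := by
    grind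
  rw [forests, forests, Set.mem_ofPred_eq, Set.mem_ofPred_eq, hsub]
  tauto

lemma encard_forests_inter_mem {E : Finset (Sym2 α × ι)} {S S' : Finset α} {e : Sym2 α × ι}
    (he : e ∈ E) (hspans : ∀ t ⊆ E.erase e, Spans (insert e t) S ↔ Spans t S')
    (hnot : ∀ t ∈ forests (E.erase e) S', ¬ Spans t S) :
    (forests E S ∩ {t | e ∈ t}).encard = (forests (E.erase e) S').encard := by
  have heE {t} (ht : t ∈ forests (E.erase e) S') : e ∉ t := fun h =>
    Finset.notMem_erase e E (ht.1 h)
  have hinj : Set.InjOn (insert e) (forests (E.erase e) S') := fun t ht t' ht' h => by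
    rw [← Finset.erase_insert (heE ht), ← Finset.erase_insert (heE ht'), h]
  rw [← hinj.encard_image]
  congr 1
  ext t
  constructor
  · rintro ⟨⟨htE, htS, hmin⟩, het : e ∈ t⟩
    have hsub : t.erase e ⊆ E.erase e := Finset.erase_subset_erase e htE
    refine ⟨t.erase e, ⟨hsub, ?_, fun p hp => ?_⟩, Finset.insert_erase het⟩
    · rwa [← hspans _ hsub, Finset.insert_erase het]
    · obtain ⟨hpe, hpt⟩ := Finset.mem_erase.1 hp
      rw [← hspans _ ((Finset.erase_subset p _).trans hsub), Finset.erase_right_comm,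
        Finset.insert_erase (Finset.mem_erase.2 ⟨hpe.symm, het⟩)]
      exact hmin p hpt
  · rintro ⟨t, ht, rfl⟩
    refine ⟨⟨?_, (hspans t ht.1).2 ht.2.1, fun p hp => ?_⟩, Finset.mem_insert_self e t⟩
    · exact Finset.insert_subset he (ht.1.trans (Finset.erase_subset e E))
    · obtain rfl | hpt := Finset.mem_insert.1 hp
      · rw [Finset.erase_insert (heE ht)]
        exact hnot t ht
      · rw [Finset.erase_insert_of_ne (ne_of_mem_of_not_mem hpt (heE ht)).symm,
          hspans _ ((Finset.erase_subset p t).trans ht.1)]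
        exact ht.2.2 p hpt

lemma encard_forests_insert_leaf {B : Finset (Sym2 α × ι)} {S : Finset α} {e : Sym2 α × ι}
    {z a : α} (he : e.1 = s(z, a)) (hz : z ∉ S) (hza : z ≠ a) (hB : ∀ q ∈ B, z ∉ q.1) :
    (forests (insert e B) S).encard = (forests B (insert z S)).encard := by
  have heB : e ∉ B := fun h => hB e h (by simp [he])
  have hnot : ∀ t ⊆ B, ¬ Spans t S := fun t ht => not_spans_of_notMem hz fun q hq => hB q (ht hq)
  have hmem : forests (insert e B) S ∩ {t | e ∈ t} = forests (insert e B) S :=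
    Set.inter_eq_left.2 fun t ht => by
      by_contra het
      exact hnot t ((Finset.subset_insert_iff_of_notMem het).1 ht.1) ht.2.1
  have hcontract := encard_forests_inter_mem (S := S) (S' := insert z S)
    (Finset.mem_insert_self e B)
  rw [hmem, Finset.erase_insert heB] at hcontract
  exact hcontract (fun t ht => spans_insert_iff_of_leaf he hz hza fun q hq => hB q (ht hq))
    fun t ht => hnot t ht.1

lemma exists_spans_erase_insert [Finite α] {t : Finset (Sym2 α × ι)} {S : Finset α} {x : α}
    (hx : x ∉ S) (ht : Spans t S) : ∃ p ∈ t, Spans (t.erase p) (insert x S) := by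
  cases nonempty_fintype α
  -- `D` consists of the vertices that `t` connects to `S` only through `x`.
  let D : Finset α := {v | ∃ F : Finset α, v ∈ F ∧ Disjoint F (insert x S) ∧
    ∀ p ∈ t, Crosses F p.1 → x ∈ p.1}
  have mem_D {v : α} : v ∈ D ↔ ∃ F : Finset α, v ∈ F ∧ Disjoint F (insert x S) ∧
      ∀ p ∈ t, Crosses F p.1 → x ∈ p.1 := by simp [D]
  have hDS : Disjoint D (insert x S) := Finset.disjoint_left.2 fun v hv =>
    let ⟨_, hvF, hF, _⟩ := mem_D.1 hv
    Finset.disjoint_left.1 hF hvF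
  rw [Finset.disjoint_insert_right] at hDS
  obtain ⟨p, hp, u, hu, w, hw, hpuw⟩ := ht (insert x D) (Finset.insert_nonempty x D)
    (Finset.disjoint_insert_left.2 ⟨hx, hDS.2⟩)
  rw [Finset.mem_insert, not_or] at hw
  have hux : u = x := by
    refine (Finset.mem_insert.1 hu).resolve_right fun huD => ?_
    obtain ⟨F, huF, hF, hFx⟩ := mem_D.1 huD
    have hxp : x ∈ p.1 :=
      hFx p hp ⟨u, huF, w, fun hwF => hw.2 (mem_D.2 ⟨F, hwF, hF, hFx⟩), hpuw⟩
    rw [hpuw, Sym2.mem_iff] at hxp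
    obtain rfl | rfl := hxp
    exacts [hDS.1 huD, hw.1 rfl]
  subst hux
  refine ⟨p, hp, fun F hF hFS => ?_⟩
  by_contra! hnone
  have hFp : ∀ q ∈ t, Crosses F q.1 → q = p := fun q hq hcross => by
    by_contra hqp
    exact hnone q (Finset.mem_erase.2 ⟨hqp, hq⟩) hcross
  have hFD : F ⊆ D := fun v hv =>
    mem_D.2 ⟨F, hv, hFS, fun q hq hcross => by simp [hFp q hq hcross, hpuw]⟩
  rw [Finset.disjoint_insert_right] at hFS
  obtain ⟨q, hq, hcross⟩ := ht F hF hFS.2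
  rw [hFp q hq hcross, hpuw, crosses_mk] at hcross
  exact hcross (iff_of_false hFS.1 fun hwF => hw.2 (hFD hwF))

lemma encard_forests_eq_add [Finite α] {E : Finset (Sym2 α × ι)} {S : Finset α} {e : Sym2 α × ι}
    {x a : α} (he : e ∈ E) (hxa : e.1 = s(x, a)) (hx : x ∉ S) (ha : a ∈ S) :
    (forests E S).encard =
      (forests (E.erase e) S).encard + (forests (E.erase e) (insert x S)).encard := by
  rw [← Set.encard_sdiff_add_encard_inter (forests E S) {t | e ∈ t}, forests_sdiff_mem]
  congr 1
  refine encard_forests_inter_mem he (fun t _ => spans_insert_iff_of_mem hxa ha) fun t ht h => ?_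
  obtain ⟨p, hp, hspans⟩ := exists_spans_erase_insert hx h
  exact ht.2.2 p hp hspans

lemma forests_univ [Fintype α] (E : Finset (Sym2 α × ι)) : forests E Finset.univ = {∅} := by
  have hspans (t : Finset (Sym2 α × ι)) : Spans t Finset.univ := fun F ⟨v, hv⟩ hdisj =>
    absurd (Finset.mem_univ v) (Finset.disjoint_left.1 hdisj hv)
  ext t
  simp only [forests, hspans, not_true_eq_false, Set.mem_ofPred_eq, true_and, imp_false,
    Set.mem_singleton_iff, Finset.eq_empty_iff_forall_notMem]
  exact and_iff_right_of_imp fun h p hp => absurd hp (h p)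

lemma forests_eq_empty [Fintype α] {E : Finset (Sym2 α × ι)} {S : Finset α} (hS : Sᶜ.Nonempty)
    (h : ∀ p ∈ E, ¬ Crosses Sᶜ p.1) : forests E S = ∅ := by
  refine Set.eq_empty_of_forall_notMem fun t ht => ?_
  obtain ⟨p, hp, hcross⟩ := ht.2.1 Sᶜ hS disjoint_compl_left
  exact h p (ht.1 hp) hcross

end Forests

section Recurrents

variable {α ι : Type*}

lemma encard_eq_of_add {A B : Set (α → ℕ)} {c : α → ℕ} (hc : ∀ η ∈ B, c ≤ η)
    (h : ∀ ζ, ζ ∈ A ↔ ζ + c ∈ B) : A.encard = B.encard := by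
  rw [← (add_left_injective c).encard_image A]
  congr 1
  ext η
  refine ⟨fun ⟨ζ, hζ, hζη⟩ => hζη ▸ (h ζ).1 hζ, fun hη => ⟨η - c, (h _).2 ?_, ?_⟩⟩ <;>
  simp [tsub_add_cancel_of_le (hc η hη), hη]

variable [DecidableEq α]

/-- The number of edges of `E` from `x` to `F`: the counterpart of `Graph.degIn` for the edge set
`E`. A loop counts once. -/
def edgeDeg (E : Finset (Sym2 α × ι)) (F : Finset α) (x : α) : ℕ :=
  {p ∈ E | ∃ y ∈ F, p.1 = s(x, y)}.card

lemma edgeDeg_mono (E : Finset (Sym2 α × ι)) {F F' : Finset α} (h : F ⊆ F') (x : α) :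
    edgeDeg E F x ≤ edgeDeg E F' x :=
  Finset.card_le_card <| Finset.monotone_filter_right E fun _ _ ⟨y, hy, hxy⟩ => ⟨y, h hy, hxy⟩

/-- The recurrent sandpiles for the edge set `E` when all vertices of `S` serve as sinks, normalized
to vanish on `S`. -/
def recurrents [Fintype α] (E : Finset (Sym2 α × ι)) (S : Finset α) : Set (α → ℕ) :=
  {η | (∀ x ∈ S, η x = 0) ∧ (∀ x ∉ S, η x < edgeDeg E Finset.univ x) ∧
    ∀ F : Finset α, F.Nonempty → Disjoint F S → ∃ x ∈ F, edgeDeg E F x ≤ η x}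

lemma recurrents_univ [Fintype α] (E : Finset (Sym2 α × ι)) : recurrents E Finset.univ = {0} := by
  ext η
  refine ⟨fun hη => funext fun x => hη.1 x (Finset.mem_univ x), ?_⟩
  rintro rfl
  refine ⟨fun _ _ => rfl, fun x hx => absurd (Finset.mem_univ x) hx, fun F ⟨v, hv⟩ hdisj => ?_⟩
  exact absurd (Finset.mem_univ v) (Finset.disjoint_left.1 hdisj hv)

lemma recurrents_eq_empty [Fintype α] {E : Finset (Sym2 α × ι)} {S : Finset α}
    (hS : Sᶜ.Nonempty) (h : ∀ p ∈ E, ¬ Crosses Sᶜ p.1) : recurrents E S = ∅ := by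
  refine Set.eq_empty_of_forall_notMem fun η hη => ?_
  obtain ⟨x, hx, hle⟩ := hη.2.2 Sᶜ hS disjoint_compl_left
  have hdeg : edgeDeg E Finset.univ x ≤ edgeDeg E Sᶜ x := by
    refine Finset.card_le_card fun p hp => ?_
    obtain ⟨hpE, y, -, hxy⟩ := Finset.mem_filter.1 hp
    refine Finset.mem_filter.2 ⟨hpE, y, ?_, hxy⟩
    by_contra hy
    exact h p hpE ⟨x, hx, y, hy, hxy⟩
  exact (hle.trans_lt (hη.2.1 x (Finset.mem_compl.1 hx))).not_ge hdeg

variable [DecidableEq ι]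

lemma edgeDeg_erase_of_forall_ne {E : Finset (Sym2 α × ι)} {F : Finset α} {e : Sym2 α × ι} {x : α}
    (h : ∀ y ∈ F, e.1 ≠ s(x, y)) : edgeDeg (E.erase e) F x = edgeDeg E F x := by
  rw [edgeDeg, Finset.filter_erase, Finset.erase_eq_of_notMem, edgeDeg]
  simpa using fun _ => h

lemma edgeDeg_eq_erase_add_one {E : Finset (Sym2 α × ι)} {F : Finset α} {e : Sym2 α × ι} {x y : α}
    (he : e ∈ E) (hy : y ∈ F) (hxy : e.1 = s(x, y)) :
    edgeDeg E F x = edgeDeg (E.erase e) F x + 1 := by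
  rw [edgeDeg, edgeDeg, Finset.filter_erase, Finset.card_erase_add_one]
  exact Finset.mem_filter.2 ⟨he, y, hy, hxy⟩

section DeletionContraction

variable {E : Finset (Sym2 α × ι)} {S : Finset α} {e : Sym2 α × ι} {x a : α}

lemma edgeDeg_erase_of_disjoint (hxa : e.1 = s(x, a)) (ha : a ∈ S) {F : Finset α}
    (hF : Disjoint F S) {z : α} (hz : z ∈ F) : edgeDeg (E.erase e) F z = edgeDeg E F z :=
  have haF : a ∉ F := Finset.disjoint_right.1 hF ha
  edgeDeg_erase_of_forall_ne fun y hy => by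
    rw [hxa, Ne, Sym2.eq_iff]
    rintro (⟨-, rfl⟩ | ⟨-, rfl⟩)
    exacts [haF hy, haF hz]

variable [Fintype α]

lemma edgeDeg_erase_univ_of_ne (hxa : e.1 = s(x, a)) (ha : a ∈ S) {z : α} (hz : z ∉ S)
    (hzx : z ≠ x) : edgeDeg (E.erase e) Finset.univ z = edgeDeg E Finset.univ z :=
  edgeDeg_erase_of_forall_ne fun y _ => by
    rw [hxa, Ne, Sym2.eq_iff]
    rintro (⟨rfl, -⟩ | ⟨-, rfl⟩)
    exacts [hzx rfl, hz ha]

lemma recurrents_inter_lt (he : e ∈ E) (hxa : e.1 = s(x, a)) (hx : x ∉ S) (ha : a ∈ S) :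
    recurrents E S ∩ {η | η x < edgeDeg (E.erase e) Finset.univ x} =
      recurrents (E.erase e) S := by
  have hdeg := edgeDeg_eq_erase_add_one he (Finset.mem_univ a) hxa
  have hample (η : α → ℕ) {F : Finset α} (hF : Disjoint F S) :
      (∃ z ∈ F, edgeDeg (E.erase e) F z ≤ η z) ↔ ∃ z ∈ F, edgeDeg E F z ≤ η z :=
    exists_congr fun z => and_congr_right fun hz => by
      rw [edgeDeg_erase_of_disjoint hxa ha hF hz]
  ext η
  constructor
  · rintro ⟨⟨hS, hstable, hamp⟩, hlt⟩
    refine ⟨hS, fun z hz => ?_, fun F hF hFS => (hample η hFS).2 (hamp F hF hFS)⟩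
    obtain rfl | hzx := eq_or_ne z x
    · exact hlt
    · exact (edgeDeg_erase_univ_of_ne hxa ha hz hzx).symm ▸ hstable z hz
  · rintro ⟨hS, hstable, hamp⟩
    refine ⟨⟨hS, fun z hz => ?_, fun F hF hFS => (hample η hFS).1 (hamp F hF hFS)⟩, hstable x hx⟩
    obtain rfl | hzx := eq_or_ne z x
    · exact hdeg ▸ (hstable z hz).trans (Nat.lt_succ_self _)
    · exact edgeDeg_erase_univ_of_ne hxa ha hz hzx ▸ hstable z hz

lemma mem_recurrents_insert_iff_of_eq (he : e ∈ E) (hxa : e.1 = s(x, a)) (hx : x ∉ S) (ha : a ∈ S)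
    {ζ η : α → ℕ} (hζη : ∀ z, z ≠ x → ζ z = η z) (hζ : ζ x = 0)
    (hη : η x = edgeDeg (E.erase e) Finset.univ x) :
    ζ ∈ recurrents (E.erase e) (insert x S) ↔ η ∈ recurrents E S := by
  have hneS {z : α} (hz : z ∈ S) : z ≠ x := ne_of_mem_of_not_mem hz hx
  refine and_congr ⟨fun h z hz => ?_, fun h z hz => ?_⟩ <| and_congr
    ⟨fun h z hz => ?_, fun h z hz => ?_⟩ ⟨fun h F hF hFS => ?_, fun h F hF hFS => ?_⟩
  · rw [← hζη z (hneS hz), h z (Finset.mem_insert_of_mem hz)]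
  · obtain rfl | hz := Finset.mem_insert.1 hz
    · exact hζ
    · rw [hζη z (hneS hz), h z hz]
  · obtain rfl | hzx := eq_or_ne z x
    · rw [hη, edgeDeg_eq_erase_add_one he (Finset.mem_univ a) hxa]
      exact Nat.lt_succ_self _
    · rw [← hζη z hzx, ← edgeDeg_erase_univ_of_ne hxa ha hz hzx]
      exact h z (by simp [hz, hzx])
  · rw [Finset.mem_insert, not_or] at hz
    rw [hζη z hz.1, edgeDeg_erase_univ_of_ne hxa ha hz.2 hz.1]
    exact h z hz.2
  · by_cases hxF : x ∈ F
    · refine ⟨x, hxF, ?_⟩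
      rw [hη, ← edgeDeg_erase_of_disjoint hxa ha hFS hxF]
      exact edgeDeg_mono _ (Finset.subset_univ F) x
    · obtain ⟨z, hz, hle⟩ := h F hF (Finset.disjoint_insert_right.2 ⟨hxF, hFS⟩)
      refine ⟨z, hz, ?_⟩
      rwa [← hζη z (ne_of_mem_of_not_mem hz hxF), ← edgeDeg_erase_of_disjoint hxa ha hFS hz]
  · rw [Finset.disjoint_insert_right] at hFS
    obtain ⟨z, hz, hle⟩ := h F hF hFS.2
    refine ⟨z, hz, ?_⟩
    rwa [hζη z (ne_of_mem_of_not_mem hz hFS.1), edgeDeg_erase_of_disjoint hxa ha hFS.2 hz]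

lemma mem_recurrents_insert_iff (he : e ∈ E) (hxa : e.1 = s(x, a)) (hx : x ∉ S) (ha : a ∈ S)
    (ζ : α → ℕ) : ζ ∈ recurrents (E.erase e) (insert x S) ↔
      ζ + Pi.single x (edgeDeg (E.erase e) Finset.univ x) ∈
        recurrents E S \ {η | η x < edgeDeg (E.erase e) Finset.univ x} := by
  have hiff (hζ : ζ x = 0) := mem_recurrents_insert_iff_of_eq he hxa hx ha (ζ := ζ)
    (η := ζ + Pi.single x (edgeDeg (E.erase e) Finset.univ x))
    (fun z hz => by simp [hz]) hζ (by simp [hζ])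
  refine ⟨fun h => ⟨(hiff (h.1 x (Finset.mem_insert_self x S))).1 h, by simp⟩, fun h => ?_⟩
  refine (hiff ?_).2 h.1
  have hlt := h.1.2.1 x hx
  rw [Pi.add_apply, Pi.single_eq_same, edgeDeg_eq_erase_add_one he (Finset.mem_univ a) hxa] at hlt
  omega

lemma encard_recurrents_eq_add (he : e ∈ E) (hxa : e.1 = s(x, a)) (hx : x ∉ S) (ha : a ∈ S) :
    (recurrents E S).encard =
      (recurrents (E.erase e) S).encard + (recurrents (E.erase e) (insert x S)).encard := by
  rw [← Set.encard_sdiff_add_encard_inter (recurrents E S)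
    {η | η x < edgeDeg (E.erase e) Finset.univ x}, recurrents_inter_lt he hxa hx ha, add_comm]
  congr 1
  refine (encard_eq_of_add (fun η hη => ?_) (mem_recurrents_insert_iff he hxa hx ha)).symm
  intro z
  obtain rfl | hzx := eq_or_ne z x
  · simpa using hη.2
  · simp [hzx]

end DeletionContraction

theorem encard_recurrents_eq_encard_forests [Fintype α] (E : Finset (Sym2 α × ι)) (S : Finset α) :
    (recurrents E S).encard = (forests E S).encard := by
  induction E using Finset.strongInduction generalizing S with
  | _ E ih =>
    by_cases h : ∃ e ∈ E, Crosses Sᶜ e.1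
    · obtain ⟨e, he, x, hx, a, ha, hxa⟩ := h
      rw [Finset.mem_compl] at hx
      rw [Finset.mem_compl, not_not] at ha
      rw [encard_recurrents_eq_add he hxa hx ha, encard_forests_eq_add he hxa hx ha,
        ih _ (Finset.erase_ssubset he), ih _ (Finset.erase_ssubset he)]
    · push Not at h
      obtain rfl | hS := eq_or_ne S Finset.univ
      · rw [recurrents_univ, forests_univ, Set.encard_singleton, Set.encard_singleton]
      · have hSc : Sᶜ.Nonempty := by
          rwa [Finset.nonempty_iff_ne_empty, Ne, Finset.compl_eq_empty_iff]
        rw [recurrents_eq_empty hSc h, forests_eq_empty hSc h, Set.encard_empty, Set.encard_empty]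

end Recurrents

section Peeling

variable {α ι : Type*} [DecidableEq α]

lemma edgeDeg_singleton_comm (E : Finset (Sym2 α × ι)) (x y : α) :
    edgeDeg E {y} x = edgeDeg E {x} y := by
  simp only [edgeDeg, Finset.mem_singleton, exists_eq_left, Sym2.eq_swap]

lemma edgeDeg_pos_iff {E : Finset (Sym2 α × ι)} {F : Finset α} {x : α} :
    0 < edgeDeg E F x ↔ ∃ e ∈ E, ∃ y ∈ F, e.1 = s(x, y) := by
  rw [edgeDeg, Finset.card_pos, Finset.filter_nonempty_iff]

lemma edgeDeg_singleton_self {E : Finset (Sym2 α × ι)} (hloop : ∀ p ∈ E, ¬ p.1.IsDiag) (z : α) :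
    edgeDeg E {z} z = 0 := by
  by_contra h
  obtain ⟨p, hp, y, hy, hpy⟩ := edgeDeg_pos_iff.1 (Nat.pos_of_ne_zero h)
  exact hloop p hp (by simp [hpy, Finset.mem_singleton.1 hy])

/-- The edges left after deleting the vertex `z`. -/
def deleteVertex (E : Finset (Sym2 α × ι)) (z : α) : Finset (Sym2 α × ι) := {p ∈ E | z ∉ p.1}

lemma deleteVertex_subset (E : Finset (Sym2 α × ι)) (z : α) : deleteVertex E z ⊆ E :=
  Finset.filter_subset _ E

lemma edgeDeg_insert_of_ne (E : Finset (Sym2 α × ι)) (F : Finset α) {x z : α} (hxz : x ≠ z) :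
    edgeDeg E (insert z F) x = edgeDeg (deleteVertex E z) F x + edgeDeg E {z} x := by
  have hdisj : Disjoint {p ∈ deleteVertex E z | ∃ y ∈ F, p.1 = s(x, y)}
      {p ∈ E | ∃ y ∈ ({z} : Finset α), p.1 = s(x, y)} := by
    refine Finset.disjoint_left.2 fun p hp hp' => ?_
    obtain ⟨-, y, hy, hxy⟩ := Finset.mem_filter.1 hp'
    exact (Finset.mem_filter.1 (Finset.mem_filter.1 hp).1).2
      (by simp [hxy, Finset.mem_singleton.1 hy])
  rw [edgeDeg, edgeDeg, edgeDeg, ← Finset.card_union_of_disjoint hdisj]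
  congr 1
  ext ⟨p, k⟩
  simp only [deleteVertex, Finset.mem_filter, Finset.mem_insert, Finset.mem_union,
    Finset.mem_singleton, exists_eq_left, exists_eq_or_imp]
  constructor
  · rintro ⟨hpE, hpz | ⟨y, hy, hpy⟩⟩
    · exact .inr ⟨hpE, hpz⟩
    · obtain rfl | hyz := eq_or_ne y z
      · exact .inr ⟨hpE, hpy⟩
      · exact .inl ⟨⟨hpE, by simp [hpy, hxz.symm, hyz.symm]⟩, y, hy, hpy⟩
  · rintro (⟨⟨hpE, -⟩, h⟩ | ⟨hpE, hpz⟩)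
    exacts [⟨hpE, .inr h⟩, ⟨hpE, .inl hpz⟩]

section VertexDeletion

variable [Fintype α] {E : Finset (Sym2 α × ι)} {S : Finset α} {z : α}

lemma edgeDeg_univ_of_ne (E : Finset (Sym2 α × ι)) {x : α} (hxz : x ≠ z) :
    edgeDeg E Finset.univ x = edgeDeg (deleteVertex E z) Finset.univ x + edgeDeg E {z} x := by
  rw [← edgeDeg_insert_of_ne E Finset.univ hxz, Finset.insert_eq_of_mem (Finset.mem_univ z)]

/-- The particles that the vertices outside `S` receive when `z` topples. -/
def toppling (E : Finset (Sym2 α × ι)) (S : Finset α) (z : α) : α → ℕ :=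
  fun x => if x ∈ S then 0 else edgeDeg E {z} x

lemma toppling_le {η : α → ℕ} (hη : η ∈ recurrents E S) (hz : z ∉ S) (hηz : η z = 0) :
    toppling E S z ≤ η := by
  intro x
  by_cases hx : x ∈ S
  · simp [toppling, hx]
  rw [toppling, if_neg hx]
  obtain ⟨y, hy, hle⟩ := hη.2.2 {x, z} (Finset.insert_nonempty x {z})
    (by simp [Finset.disjoint_left, hx, hz])
  obtain rfl | rfl : y = x ∨ y = z := by simpa using hy
  · exact (edgeDeg_mono E (by simp) y).trans hle
  · rw [edgeDeg_singleton_comm]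
    exact (edgeDeg_mono E (by simp) y).trans (hle.trans (hηz ▸ Nat.zero_le _))

lemma add_toppling_mem_recurrents (hz : z ∉ S) (hloop : edgeDeg E {z} z = 0)
    (hpos : 0 < edgeDeg E Finset.univ z) {ζ : α → ℕ}
    (hζ : ζ ∈ recurrents (deleteVertex E z) (insert z S)) :
    ζ + toppling E S z ∈ recurrents E S ∧ (ζ + toppling E S z) z = 0 := by
  obtain ⟨hS, hstable, hamp⟩ := hζ
  have hzero : (ζ + toppling E S z) z = 0 := by
    simp [hS z (Finset.mem_insert_self z S), toppling, hloop]
  have hadd {x : α} (hx : x ∉ S) : (ζ + toppling E S z) x = ζ x + edgeDeg E {z} x := by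
    simp [toppling, hx]
  refine ⟨⟨fun x hx => ?_, fun x hx => ?_, fun F hF hFS => ?_⟩, hzero⟩
  · simp [hS x (Finset.mem_insert_of_mem hx), toppling, hx]
  · obtain rfl | hxz := eq_or_ne x z
    · rwa [hzero]
    · rw [hadd hx, edgeDeg_univ_of_ne E hxz, Nat.add_lt_add_iff_right]
      exact hstable x (by simp [hx, hxz])
  · obtain hFz | hFz := (F.erase z).eq_empty_or_nonempty
    · obtain rfl : F = {z} := by grind [Finset.erase_eq_empty_iff]
      exact ⟨z, Finset.mem_singleton_self z, hloop.trans_le (Nat.zero_le _)⟩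
    · obtain ⟨x, hx, hle⟩ := hamp (F.erase z) hFz (Finset.disjoint_insert_right.2
        ⟨Finset.notMem_erase z F, hFS.mono_left (Finset.erase_subset z F)⟩)
      obtain ⟨hxz, hxF⟩ := Finset.mem_erase.1 hx
      refine ⟨x, hxF, ?_⟩
      calc edgeDeg E F x
        _ ≤ edgeDeg E (insert z (F.erase z)) x := edgeDeg_mono E (Finset.insert_erase_subset z F) x
        _ = edgeDeg (deleteVertex E z) (F.erase z) x + edgeDeg E {z} x :=
          edgeDeg_insert_of_ne E _ hxz
        _ ≤ (ζ + toppling E S z) x := by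
          rw [hadd (Finset.disjoint_left.1 hFS hxF)]
          exact Nat.add_le_add_right hle _

lemma mem_recurrents_of_add_toppling (hz : z ∉ S) {ζ : α → ℕ}
    (hη : ζ + toppling E S z ∈ recurrents E S) (hηz : (ζ + toppling E S z) z = 0) :
    ζ ∈ recurrents (deleteVertex E z) (insert z S) := by
  obtain ⟨hS, hstable, hamp⟩ := hη
  have hadd {x : α} (hx : x ∉ S) : (ζ + toppling E S z) x = ζ x + edgeDeg E {z} x := by
    simp [toppling, hx]
  refine ⟨fun x hx => ?_, fun x hx => ?_, fun F hF hFzS => ?_⟩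
  · obtain rfl | hx := Finset.mem_insert.1 hx
    exacts [(Nat.add_eq_zero_iff.1 hηz).1, (Nat.add_eq_zero_iff.1 (hS x hx)).1]
  · rw [Finset.mem_insert, not_or] at hx
    have hlt := hstable x hx.2
    rwa [hadd hx.2, edgeDeg_univ_of_ne E hx.1, Nat.add_lt_add_iff_right] at hlt
  · have ⟨hzF, hFS⟩ := Finset.disjoint_insert_right.1 hFzS
    have hample : ∃ x ∈ F, edgeDeg E (insert z F) x ≤ (ζ + toppling E S z) x := by
      obtain ⟨x, hx, hle⟩ := hamp (insert z F) (Finset.insert_nonempty z F)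
        (Finset.disjoint_insert_left.2 ⟨hz, hFS⟩)
      obtain rfl | hx := Finset.mem_insert.1 hx
      · obtain ⟨y, hy, hley⟩ := hamp F hF hFS
        have hyx : edgeDeg E {x} y = 0 := by
          rw [edgeDeg_singleton_comm, ← Nat.le_zero, ← hηz]
          exact (edgeDeg_mono E (by simp [hy]) x).trans hle
        refine ⟨y, hy, ?_⟩
        rw [edgeDeg_insert_of_ne E F (ne_of_mem_of_not_mem hy hzF), hyx]
        exact (Finset.card_le_card (Finset.filter_subset_filter _
          (deleteVertex_subset E x))).trans hley
      · exact ⟨x, hx, hle⟩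
    obtain ⟨x, hx, hle⟩ := hample
    refine ⟨x, hx, ?_⟩
    rwa [hadd (Finset.disjoint_left.1 hFS hx), edgeDeg_insert_of_ne E F
      (ne_of_mem_of_not_mem hx hzF), Nat.add_le_add_iff_right] at hle

lemma mem_recurrents_deleteVertex_iff (hz : z ∉ S) (hloop : edgeDeg E {z} z = 0)
    (hpos : 0 < edgeDeg E Finset.univ z) (ζ : α → ℕ) :
    ζ ∈ recurrents (deleteVertex E z) (insert z S) ↔
      ζ + toppling E S z ∈ recurrents E S ∧ (ζ + toppling E S z) z = 0 :=
  ⟨add_toppling_mem_recurrents hz hloop hpos, fun h => mem_recurrents_of_add_toppling hz h.1 h.2⟩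

end VertexDeletion

variable {β : Type*} [LinearOrder β]

/-- The indegree of `w` when the edges of `E` inside `W` are oriented from the smaller to the larger
value of `r`. -/
def indegree (E : Finset (Sym2 α × ι)) (r : α → β) (W : Finset α) (w : α) : ℕ :=
  edgeDeg E {y ∈ W | r y < r w} w

lemma indegree_eq_zero {E : Finset (Sym2 α × ι)} {r : α → β} {W : Finset α} {z : α}
    (hz : ∀ y ∈ W, r z ≤ r y) : indegree E r W z = 0 := by
  rw [indegree, Finset.filter_eq_empty_iff.2 fun y hy => (hz y hy).not_gt]
  simp [edgeDeg]

lemma indegree_insert (E : Finset (Sym2 α × ι)) {r : α → β} {W : Finset α} {w z : α}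
    (hzw : r z < r w) :
    indegree E r (insert z W) w = indegree (deleteVertex E z) r W w + edgeDeg E {z} w := by
  rw [indegree, Finset.filter_insert, if_pos hzw, indegree,
    edgeDeg_insert_of_ne E _ (ne_of_apply_ne r hzw.ne')]

variable [Fintype α]

/-- The recurrent sandpiles whose restriction to `W` is given by `indegree`. -/
def indegreeRecurrents (E : Finset (Sym2 α × ι)) (r : α → β) (W S : Finset α) : Set (α → ℕ) :=
  {η | η ∈ recurrents E S ∧ ∀ w ∈ W, η w = indegree E r W w}

lemma encard_indegreeRecurrents_insert {E : Finset (Sym2 α × ι)} {r : α → β} {W S : Finset α}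
    {z : α} (hz : z ∉ S) (hloop : edgeDeg E {z} z = 0) (hpos : 0 < edgeDeg E Finset.univ z)
    (hWS : Disjoint W S) (hmin : ∀ w ∈ W, r z < r w) :
    (indegreeRecurrents E r (insert z W) S).encard =
      (indegreeRecurrents (deleteVertex E z) r W (insert z S)).encard := by
  have hindz : indegree E r (insert z W) z = 0 :=
    indegree_eq_zero (by simpa using fun w hw => (hmin w hw).le)
  refine (encard_eq_of_add (c := toppling E S z) (fun η hη => ?_) fun ζ => ?_).symm
  · exact toppling_le hη.1 hz ((hη.2 z (Finset.mem_insert_self z W)).trans hindz)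
  · rw [indegreeRecurrents, Set.mem_ofPred_eq, mem_recurrents_deleteVertex_iff hz hloop hpos,
      and_assoc, indegreeRecurrents, Set.mem_ofPred_eq, Finset.forall_mem_insert, hindz]
    refine and_congr_right fun _ => and_congr_right fun _ => forall₂_congr fun w hw => ?_
    rw [indegree_insert E (hmin w hw), Pi.add_apply, toppling,
      if_neg (Finset.disjoint_left.1 hWS hw), Nat.add_right_cancel_iff]

variable [DecidableEq ι]

theorem exists_encard_indegreeRecurrents_eq_encard_forests {E : Finset (Sym2 α × ι)}
    {r : α → β} {W S : Finset α} (hloop : ∀ p ∈ E, ¬ p.1.IsDiag) (hr : Set.InjOn r W)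
    (hWS : Disjoint W S) (hlt : ∀ w ∈ W, indegree E r W w < edgeDeg E Finset.univ w) :
    ∃ T ⊆ E, (∀ p ∈ E \ T, ∃ w ∈ W, w ∈ p.1) ∧
      (indegreeRecurrents E r W S).encard = (forests T S).encard := by
  induction W using Finset.induction_on_min_value r generalizing E S with
  | empty =>
    exact ⟨E, subset_rfl, by simp, by
      simp [indegreeRecurrents, encard_recurrents_eq_encard_forests]⟩
  | insert z W hzW hmin ih =>
    obtain ⟨hzS, hWS⟩ := Finset.disjoint_insert_left.1 hWS
    have hmin' : ∀ w ∈ W, r z < r w := fun w hw => (hmin w hw).lt_of_ne fun h =>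
      ne_of_mem_of_not_mem hw hzW (hr (by simp [hw]) (by simp) h.symm)
    have hpos : 0 < edgeDeg E Finset.univ z := (Nat.zero_le _).trans_lt (hlt z (by simp))
    obtain ⟨e, heE, a, -, hza⟩ := edgeDeg_pos_iff.1 hpos
    obtain ⟨T, hTE, htouch, hcard⟩ := ih (E := deleteVertex E z) (S := insert z S)
      (fun p hp => hloop p (deleteVertex_subset E z hp))
      (hr.mono (by simp)) (Finset.disjoint_insert_right.2 ⟨hzW, hWS⟩) fun w hw => by
        have := hlt w (Finset.mem_insert_of_mem hw)
        rwa [indegree_insert E (hmin' w hw), edgeDeg_univ_of_ne E (ne_of_mem_of_not_mem hw hzW),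
          Nat.add_lt_add_iff_right] at this
    refine ⟨insert e T, Finset.insert_subset heE (hTE.trans (deleteVertex_subset E z)),
      fun p hp => ?_, ?_⟩
    · rw [Finset.mem_sdiff, Finset.mem_insert, not_or] at hp
      by_cases hzp : z ∈ p.1
      · exact ⟨z, Finset.mem_insert_self z W, hzp⟩
      · obtain ⟨w, hw, hwp⟩ := htouch p
          (Finset.mem_sdiff.2 ⟨Finset.mem_filter.2 ⟨hp.1, hzp⟩, hp.2.2⟩)
        exact ⟨w, Finset.mem_insert_of_mem hw, hwp⟩
    · rw [encard_indegreeRecurrents_insert hzS (edgeDeg_singleton_self hloop z) hpos hWS hmin',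
        hcard, encard_forests_insert_leaf hza hzS (fun h => hloop e heE (by simp [hza, h]))
          fun q hq => (Finset.mem_filter.1 (hTE hq)).2]

end Peeling

section Graph

variable {α : Type*}

lemma exists_rel_of_reflTransGen {r : α → α → Prop} {F : Set α} {u v : α}
    (h : Relation.ReflTransGen r u v) (hu : u ∈ F) (hv : v ∉ F) :
    ∃ x ∈ F, ∃ y ∉ F, r x y := by
  induction h with
  | refl => exact absurd hu hv
  | @tail x y _ hxy ih =>
    by_cases hx : x ∈ F
    exacts [⟨x, hx, y, hv, hxy⟩, ih hx]

namespace Graph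

variable {G : Graph α} {W U : Finset α} {ξ ξ' : α → ℕ}

lemma degIn_mono_s1 (G : Graph α) (h : U ⊆ W) (x : α) : G.degIn U x ≤ G.degIn W x :=
  Finset.sum_le_sum_of_subset h

variable [Fintype α]

lemma WiredRecurrent.mono (h : G.WiredRecurrent W ξ) (hU : U ⊆ W) (hξ : EqOn ξ ξ' U) :
    G.WiredRecurrent U ξ' := by
  refine ⟨fun x hx => hξ x hx ▸ h.1 x (hU hx), fun F hF hne => ?_⟩
  obtain ⟨x, hx, hle⟩ := h.2 F (hF.trans hU) hne
  exact ⟨x, hx, hξ x (hF hx) ▸ hle⟩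

lemma exists_degIn_lt_deg {F : Finset α} {v : α} (hconn : G.ConnectedOn {x | x ∉ W})
    (hW : G.sink ∉ W) (hF : G.sink ∉ F) (hvF : v ∈ F) (hvW : v ∉ W) :
    ∃ x ∈ F, x ∉ W ∧ G.degIn F x < G.deg x := by
  obtain ⟨x, hx, y, hy, hxW, -, hxy⟩ :=
    exists_rel_of_reflTransGen (F := F) (hconn v hvW G.sink hW) hvF hF
  exact ⟨x, hx, hxW, Finset.sum_lt_sum_of_subset (Finset.subset_univ F) (Finset.mem_univ y) hy hxy
    fun _ _ _ => Nat.zero_le _⟩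

variable [DecidableEq α]

lemma mem_vSet {x : α} : x ∈ G.VSet ↔ x ≠ G.sink := by
  simp [VSet]

lemma subset_vSet_iff {F : Finset α} : F ⊆ G.VSet ↔ G.sink ∉ F := by
  simp [VSet, Finset.subset_erase]

/-- The largest stable extension of `ξ` from `W` to the whole graph. -/
def maxExtension (G : Graph α) (W : Finset α) (ξ : α → ℕ) : α → ℕ :=
  fun x => if x ∈ W then ξ x else G.deg x - 1

lemma recurrent_maxExtension (hconn : G.ConnectedOn {x | x ∉ W}) (hW : G.sink ∉ W)
    (hξ : G.WiredRecurrent W ξ) : G.Recurrent (G.maxExtension W ξ) := by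
  refine ⟨fun x hx => ?_, fun F hF hne => ?_⟩
  · by_cases hxW : x ∈ W
    · simpa [maxExtension, hxW] using hξ.1 x hxW
    · obtain ⟨y, hy, -, hlt⟩ := exists_degIn_lt_deg hconn hW (F := {x})
        (by simpa [eq_comm] using mem_vSet.1 hx) (Finset.mem_singleton_self x) hxW
      obtain rfl := Finset.mem_singleton.1 hy
      rw [maxExtension, if_neg hxW]
      omega
  · by_cases hFW : F ⊆ W
    · obtain ⟨x, hx, hle⟩ := hξ.2 F hFW hne
      exact ⟨x, hx, by rwa [maxExtension, if_pos (hFW hx)]⟩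
    · obtain ⟨v, hvF, hvW⟩ := Finset.not_subset.1 hFW
      obtain ⟨x, hx, hxW, hlt⟩ := exists_degIn_lt_deg hconn hW (subset_vSet_iff.1 hF) hvF hvW
      exact ⟨x, hx, by rw [maxExtension, if_neg hxW]; omega⟩

lemma Minimal.wiredMinimal (hconn : G.ConnectedOn {x | x ∉ W}) (hW : G.sink ∉ W)
    (h : G.Minimal W ξ) : G.WiredMinimal W ξ := by
  obtain ⟨η, hη, hηξ⟩ := h.1
  have hξ : G.WiredRecurrent W ξ := WiredRecurrent.mono hη (subset_vSet_iff.2 hW) hηξ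
  refine ⟨hξ, fun w hw ⟨hpos, hsub⟩ => ?_⟩
  have hext : EqOn (G.maxExtension W ξ) ξ W := fun x hx => if_pos hx
  have hcomm : SubOne (G.maxExtension W ξ) w = G.maxExtension W (SubOne ξ w) := by
    ext x
    by_cases hxw : x = w <;> simp [SubOne, maxExtension, hxw, hw]
  refine h.2 _ (recurrent_maxExtension hconn hW hξ) hext w hw ⟨?_, ?_⟩
  · rwa [hext w hw]
  · rw [hcomm]
    exact recurrent_maxExtension hconn hW hsub

lemma WiredRecurrent.of_erase {z : α} (hdeg : ξ z < G.deg z) (hz : G.degIn W z ≤ ξ z)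
    (h : G.WiredRecurrent (W.erase z) ξ) : G.WiredRecurrent W ξ := by
  refine ⟨fun x hx => ?_, fun F hF hne => ?_⟩
  · obtain rfl | hxz := eq_or_ne x z
    exacts [hdeg, h.1 x (Finset.mem_erase.2 ⟨hxz, hx⟩)]
  · by_cases hzF : z ∈ F
    · exact ⟨z, hzF, (degIn_mono_s1 G hF z).trans hz⟩
    · exact h.2 F (Finset.subset_erase.2 ⟨hF, hzF⟩) hne

lemma WiredMinimal.eq_degIn {z : α} (h : G.WiredMinimal W ξ) (hzW : z ∈ W)
    (hz : G.degIn W z ≤ ξ z) : ξ z = G.degIn W z := by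
  by_contra hne
  have hdeg := h.1.1 z hzW
  have hat : SubOne ξ z z = ξ z - 1 := if_pos rfl
  refine h.2 z hzW ⟨by omega, .of_erase (z := z) (by omega) (by omega) ?_⟩
  exact h.1.mono (Finset.erase_subset z W) fun x hx => (if_neg (Finset.ne_of_mem_erase hx)).symm

lemma WiredMinimal.erase {z : α} (h : G.WiredMinimal W ξ) (hzW : z ∈ W)
    (hz : G.degIn W z ≤ ξ z) : G.WiredMinimal (W.erase z) ξ := by
  refine ⟨h.1.mono (Finset.erase_subset z W) fun _ _ => rfl, fun w hw ⟨hpos, hsub⟩ => ?_⟩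
  obtain ⟨hwz, hwW⟩ := Finset.mem_erase.1 hw
  have hat : SubOne ξ w z = ξ z := if_neg hwz.symm
  exact h.2 w hwW ⟨hpos, .of_erase (hat ▸ h.1.1 z hzW) (hat ▸ hz) hsub⟩

theorem WiredMinimal.exists_eq_degIn (hloop : ∀ x, G.b x x = 0) (h : G.WiredMinimal W ξ) :
    ∃ r : α → ℕ, Set.InjOn r W ∧ ∀ w ∈ W, ξ w = G.degIn {y ∈ W | r y < r w} w := by
  induction W using Finset.strongInduction with
  | _ W ih =>
    obtain rfl | hW := W.eq_empty_or_nonempty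
    · exact ⟨0, by simp, by simp⟩
    obtain ⟨z, hzW, hz⟩ := h.1.2 W subset_rfl hW
    obtain ⟨r, hr, hξ⟩ := ih (W.erase z) (Finset.erase_ssubset hzW) (h.erase hzW hz)
    obtain ⟨U, hzU, rfl⟩ : ∃ U, z ∉ U ∧ insert z U = W :=
      ⟨W.erase z, Finset.notMem_erase z W, Finset.insert_erase hzW⟩
    rw [Finset.erase_insert hzU] at hr hξ
    have hlt : ∀ y ∈ U, r y < U.sup r + 1 := fun y hy => Nat.lt_succ_of_le (Finset.le_sup hy)
    have hupd : ∀ y ∈ U, Function.update r z (U.sup r + 1) y = r y := fun y hy =>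
      Function.update_of_ne (ne_of_mem_of_not_mem hy hzU) _ _
    refine ⟨Function.update r z (U.sup r + 1), ?_, ?_⟩
    · rw [Finset.coe_insert, Set.injOn_insert hzU]
      refine ⟨Set.EqOn.injOn_iff hupd |>.2 hr, ?_⟩
      rintro ⟨y, hy, h⟩
      rw [hupd y hy, Function.update_self] at h
      exact (hlt y hy).ne h
    · rw [Finset.forall_mem_insert]
      refine ⟨?_, fun w hw => ?_⟩
      · rw [h.eq_degIn hzW hz, Function.update_self, Finset.filter_insert, Function.update_self,
          if_neg (lt_irrefl _), Finset.filter_true_of_mem fun y hy => hupd y hy ▸ hlt y hy,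
          degIn, Finset.sum_insert hzU, hloop, zero_add, degIn]
      · rw [hξ w hw, Finset.filter_insert, Function.update_self, hupd w hw,
          if_neg (hlt w hw).not_gt]
        exact congrArg (G.degIn · w) (Finset.filter_congr fun y hy => by rw [hupd y hy])

/-- The edges of `G` as a finite set; the second component numbers parallel edges. -/
def edges (G : Graph α) : Finset (Sym2 α × ℕ) :=
  Finset.univ.biUnion fun q : α × α => (Finset.range (G.b q.1 q.2)).image (Prod.mk s(q.1, q.2))

lemma mem_edges {p : Sym2 α × ℕ} : p ∈ G.edges ↔ ∃ x y, p.1 = s(x, y) ∧ p.2 < G.b x y := by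
  simp only [edges, Finset.mem_biUnion, Finset.mem_univ, true_and, Finset.mem_image,
    Finset.mem_range, Prod.exists]
  constructor
  · rintro ⟨x, y, k, hk, rfl⟩
    exact ⟨x, y, rfl, hk⟩
  · rintro ⟨x, y, hxy, hk⟩
    exact ⟨x, y, p.2, hk, by rw [← hxy]⟩

lemma mk_mem_edges (hsymm : ∀ x y, G.b x y = G.b y x) {x y : α} {k : ℕ} :
    (s(x, y), k) ∈ G.edges ↔ k < G.b x y := by
  rw [mem_edges]
  constructor
  · rintro ⟨u, v, huv, hk⟩
    obtain ⟨rfl, rfl⟩ | ⟨rfl, rfl⟩ := Sym2.eq_iff.1 huv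
    exacts [hk, hsymm x y ▸ hk]
  · exact fun hk => ⟨x, y, rfl, hk⟩

lemma not_isDiag_of_mem_edges (hloop : ∀ x, G.b x x = 0) {p : Sym2 α × ℕ} (hp : p ∈ G.edges) :
    ¬ p.1.IsDiag := by
  obtain ⟨x, y, hxy, hk⟩ := mem_edges.1 hp
  rw [hxy, Sym2.mk_isDiag_iff]
  rintro rfl
  exact Nat.not_lt_zero _ (hloop x ▸ hk)

lemma edgeDeg_edges (hsymm : ∀ x y, G.b x y = G.b y x) (F : Finset α) (x : α) :
    edgeDeg G.edges F x = G.degIn F x := by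
  have hdeg : G.degIn F x = (F.sigma fun y => Finset.range (G.b x y)).card := by
    simp only [degIn, Finset.card_sigma, Finset.card_range]
  rw [hdeg, edgeDeg, eq_comm]
  refine Finset.card_nbij (fun q => (s(x, q.1), q.2)) ?_ ?_ ?_
  · rintro ⟨y, k⟩ hq
    obtain ⟨hy, hk⟩ := Finset.mem_sigma.1 hq
    exact Finset.mem_filter.2 ⟨(mk_mem_edges hsymm).2 (Finset.mem_range.1 hk), y, hy, rfl⟩
  · rintro ⟨y, k⟩ - ⟨y', k'⟩ - h
    obtain ⟨hy, rfl⟩ := Prod.mk.inj h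
    obtain rfl := Sym2.congr_right.1 hy
    rfl
  · rintro ⟨p, k⟩ hp
    obtain ⟨hpG, y, hy, rfl⟩ := Finset.mem_filter.1 hp
    exact ⟨⟨y, k⟩, Finset.mem_sigma.2
      ⟨hy, Finset.mem_range.2 ((mk_mem_edges hsymm).1 hpG)⟩, rfl⟩

lemma mem_recurrents_edges (hsymm : ∀ x y, G.b x y = G.b y x) {η : α → ℕ} :
    η ∈ recurrents G.edges {G.sink} ↔ η G.sink = 0 ∧ G.Recurrent η := by
  simp only [recurrents, Set.mem_ofPred_eq, Finset.mem_singleton, forall_eq,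
    Finset.disjoint_singleton_right, edgeDeg_edges hsymm, Recurrent, Stable, AmpleFor,
    subset_vSet_iff, mem_vSet]
  exact and_congr_right fun _ => and_congr_right fun _ => forall_congr' fun F => imp.swap

lemma mem_indegreeRecurrents_edges (hsymm : ∀ x y, G.b x y = G.b y x) {r : α → ℕ}
    (hξ : ∀ w ∈ W, ξ w = indegree G.edges r W w) {η : α → ℕ} :
    η ∈ indegreeRecurrents G.edges r W {G.sink} ↔
      η G.sink = 0 ∧ G.Recurrent η ∧ EqOn η ξ W := by
  rw [← and_assoc, ← mem_recurrents_edges hsymm]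
  exact and_congr_right fun _ => forall₂_congr fun w hw => by rw [hξ w hw]

end Graph

instance (t : Finset (Sym2 α × ℕ)) : Std.Symm (Graph.edgeRel t) where
  symm _ _ := fun ⟨k, hk⟩ => ⟨k, by rwa [Sym2.eq_swap]⟩

lemma spans_singleton_iff [Finite α] {t : Finset (Sym2 α × ℕ)} {s : α} :
    Spans t {s} ↔ ∀ u v, Relation.ReflTransGen (Graph.edgeRel t) u v := by
  cases nonempty_fintype α
  constructor
  · intro h
    have hs : ∀ u, Relation.ReflTransGen (Graph.edgeRel t) u s := by
      by_contra! ⟨w, hw⟩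
      obtain ⟨p, hp, u, hu, v, hv, hpuv⟩ :=
        h {u | ¬ Relation.ReflTransGen (Graph.edgeRel t) u s} ⟨w, by simpa using hw⟩
          (by simp [Relation.ReflTransGen.refl])
      simp only [Finset.mem_filter, Finset.mem_univ, true_and, not_not] at hu hv
      exact hu (.head ⟨p.2, by rwa [← hpuv]⟩ hv)
    exact fun u v => (hs u).trans (symm (hs v))
  · rintro h F ⟨u, hu⟩ hF
    obtain ⟨x, hx, y, hy, k, hk⟩ := exists_rel_of_reflTransGen (F := F) (h u s) hu
      (by simpa using hF)
    exact ⟨_, hk, x, hx, y, hy, rfl⟩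

lemma spans_erase_iff [Finite α] [DecidableEq α] {t : Finset (Sym2 α × ℕ)} {s x y : α}
    {p : Sym2 α × ℕ} (ht : Spans t {s}) (hp : p.1 = s(x, y)) :
    Spans (t.erase p) {s} ↔ Relation.ReflTransGen (Graph.edgeRel (t.erase p)) x y := by
  rw [spans_singleton_iff] at ht ⊢
  refine ⟨fun h => h x y, fun h u v => ?_⟩
  refine Relation.reflTransGen_closed (fun a b ⟨k, hk⟩ => ?_) u v (ht u v)
  by_cases hpk : (s(a, b), k) = p
  · rw [← hpk, Sym2.eq_iff] at hp
    obtain ⟨rfl, rfl⟩ | ⟨rfl, rfl⟩ := hp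
    exacts [h, symm h]
  · exact .single ⟨k, Finset.mem_erase.2 ⟨hpk, hk⟩⟩

lemma Graph.isSpanningTree_iff_mem_forests [Fintype α] [DecidableEq α] {G : Graph α}
    {t : Finset (Sym2 α × ℕ)} :
    G.IsSpanningTree t ↔ t ∈ forests G.edges {G.sink} := by
  rw [IsSpanningTree, ← spans_singleton_iff (s := G.sink)]
  refine and_congr (forall₂_congr fun p _ => mem_edges.symm) <| and_congr_right fun ht =>
    forall₂_congr fun p _ => ⟨fun h => ?_, fun h x y hxy => ?_⟩
  · obtain ⟨x, y, hxy⟩ : ∃ x y, p.1 = s(x, y) := Sym2.exists.1 ⟨p.1, rfl⟩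
    rw [spans_erase_iff ht hxy]
    exact h x y hxy
  · rwa [← spans_erase_iff ht hxy]

end Graph

end Sandpile

/-- For a minimal configuration `ξ` on `W`, there is a set `𝓔` of
edges touching `W` such that the number of recurrent sandpiles restricting to `ξ`
on `W` equals the number of spanning trees of `G` avoiding `𝓔`. -/
theorem statement_1 {α : Type*} [Fintype α] [DecidableEq α] (G : Sandpile.Graph α)
    (hG : G.IsSandpileGraph) (W : Finset α) (hWne : W.Nonempty) (hWs : G.sink ∉ W)
    (hconn : G.ConnectedOn {x : α | x ∉ W}) (ξ : α → ℕ)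
    (hstable : ∀ x ∈ W, ξ x < G.deg x) (hmin : G.Minimal W ξ) :
    ∃ 𝓔 : Finset (Sym2 α × ℕ),
      (∀ p ∈ 𝓔, ∃ x y : α, p.1 = s(x, y) ∧ p.2 < G.b x y ∧ (x ∈ W ∨ y ∈ W)) ∧
      Nat.card {η : α → ℕ // η G.sink = 0 ∧ G.Recurrent η ∧ Graph.EqOn η ξ W} =
        Nat.card {t : Finset (Sym2 α × ℕ) // G.IsSpanningTree t ∧ ∀ p ∈ 𝓔, p ∉ t} := by
  obtain ⟨hsymm, hloop, -⟩ := hG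
  obtain ⟨r, hr, hξ⟩ := (hmin.wiredMinimal hconn hWs).exists_eq_degIn hloop
  have hindeg : ∀ w ∈ W, ξ w = indegree G.edges r W w := fun w hw => by
    rw [hξ w hw, indegree, Graph.edgeDeg_edges hsymm]
  obtain ⟨T, hTG, htouch, hcard⟩ := exists_encard_indegreeRecurrents_eq_encard_forests
    (fun _ => Graph.not_isDiag_of_mem_edges hloop) hr (Finset.disjoint_singleton_right.2 hWs)
    fun w hw => by
      rw [← hindeg w hw, Graph.edgeDeg_edges hsymm]
      exact hstable w hw
  refine ⟨G.edges \ T, fun p hp => ?_, ?_⟩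
  · obtain ⟨x, y, hxy, hk⟩ := Graph.mem_edges.1 (Finset.mem_sdiff.1 hp).1
    obtain ⟨w, hw, hwp⟩ := htouch p hp
    refine ⟨x, y, hxy, hk, ?_⟩
    obtain rfl | rfl := Sym2.mem_iff.1 (hxy ▸ hwp)
    exacts [.inl hw, .inr hw]
  · simp only [← Graph.mem_indegreeRecurrents_edges hsymm hindeg,
      Graph.isSpanningTree_iff_mem_forests, ← mem_forests_iff_of_subset hTG]
    exact congrArg ENat.toNat hcard
end
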